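/- arXiv:2111.08199 — 2 statements merged into one kernel-verified Lean document; each statement's English description precedes it below -/
import Mathlib

section
/- The set 𝒫𝒵 of all pointed proper CAT(0) metric spaces is path-connected as a subspace of (𝒫ℳ, d_pGH), and every nonempty open subset of 𝒫𝒵 (in the subspace topology) has infinite covering dimension. -/
/-- A metric space is *geodesic* if any two points `x, y` are joined by a
geodesic, i.e. a map `γ : [0,1] → X` with `γ 0 = x`, `γ 1 = y` and
`dist (γ s) (γ t) = |s - t| * dist x y`. -/
def IsGeodesicSpace (X : Type*) [MetricSpace X] : Prop :=
  ∀ x y : X, ∃ γ : ℝ → X, γ 0 = x ∧ γ 1 = y ∧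
    ∀ s ∈ Set.Icc (0 : ℝ) 1, ∀ t ∈ Set.Icc (0 : ℝ) 1,
      dist (γ s) (γ t) = |s - t| * dist x y

/-- A metric space is *CAT(0)* if it is geodesic and every geodesic triangle
satisfies the Euclidean comparison inequality; equivalently (the formulation
used here), the comparison (CN) inequality holds along every geodesic. -/
def IsCAT0Space (X : Type*) [MetricSpace X] : Prop :=
  IsGeodesicSpace X ∧
  ∀ x y z : X, ∀ γ : ℝ → X, γ 0 = x → γ 1 = y →
    (∀ s ∈ Set.Icc (0 : ℝ) 1, ∀ t ∈ Set.Icc (0 : ℝ) 1,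
      dist (γ s) (γ t) = |s - t| * dist x y) →
    ∀ t ∈ Set.Icc (0 : ℝ) 1,
      dist z (γ t) ^ 2 ≤
        (1 - t) * dist z x ^ 2 + t * dist z y ^ 2 - t * (1 - t) * dist x y ^ 2

/-- `IsAdmissiblePair a b t h` says that `h` is a `(t; a, b)`-admissible metric
on the disjoint union `X ⊕ Y`: it is a metric restricting to the given
distances on `X²` and `Y²`, with `h(a,b) < t`, and the closed ball of radius
`t⁻¹` around `a` (resp. `b`) is contained in the open `t`-neighbourhood of `Y`
(resp. `X`). -/
def IsAdmissiblePair {X Y : Type*} [MetricSpace X] [MetricSpace Y]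
    (a : X) (b : Y) (t : ℝ) (h : X ⊕ Y → X ⊕ Y → ℝ) : Prop :=
  (∀ p q, h p q = 0 ↔ p = q) ∧
  (∀ p q, h p q = h q p) ∧
  (∀ p q r, h p r ≤ h p q + h q r) ∧
  (∀ x y : X, h (Sum.inl x) (Sum.inl y) = dist x y) ∧
  (∀ x y : Y, h (Sum.inr x) (Sum.inr y) = dist x y) ∧
  h (Sum.inl a) (Sum.inr b) < t ∧
  (∀ p, h (Sum.inl a) p ≤ t⁻¹ → ∃ y : Y, h p (Sum.inr y) < t) ∧
  (∀ p, h (Sum.inr b) p ≤ t⁻¹ → ∃ x : X, h p (Sum.inl x) < t)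

/-- The pointed Gromov–Hausdorff distance
`d_pGH = min { d'_pGH, 1/2 }`, where `d'_pGH` is the infimum of all `t > 0`
for which a `(t; a, b)`-admissible metric on `X ⊕ Y` exists.  (Taking `sInf`
of the set together with `1/2` implements the truncation at `1/2`.) -/
noncomputable def pghDistOf (X Y : Type*) [MetricSpace X] [MetricSpace Y]
    (a : X) (b : Y) : ℝ :=
  sInf (insert (1 / 2 : ℝ)
    {t : ℝ | 0 < t ∧ ∃ h : X ⊕ Y → X ⊕ Y → ℝ, IsAdmissiblePair a b t h})

/-- A pointed proper metric space: a (proper) metric space together with a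
base point. -/
structure PointedProperMetricSpace : Type 1 where
  carrier : Type
  [met : MetricSpace carrier]
  [prop : ProperSpace carrier]
  pt : carrier

attribute [instance] PointedProperMetricSpace.met PointedProperMetricSpace.prop

/-- The pointed Gromov–Hausdorff distance between pointed proper metric
spaces. -/
noncomputable def pghDist (p q : PointedProperMetricSpace) : ℝ :=
  pghDistOf p.carrier q.carrier p.pt q.pt

/-- The topology induced by the pointed Gromov–Hausdorff distance (generated
by its open balls). -/
instance : TopologicalSpace PointedProperMetricSpace :=
  TopologicalSpace.generateFrom
    {s | ∃ (p : PointedProperMetricSpace) (ε : ℝ), 0 < ε ∧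
      s = {q | pghDist p q < ε}}

/-- Two pointed metric spaces are identified in `𝒫ℳ` when there is a
base-point-preserving isometric bijection between them. -/
instance pointedIsometrySetoid : Setoid PointedProperMetricSpace where
  r p q := ∃ e : p.carrier ≃ᵢ q.carrier, e p.pt = q.pt
  iseqv := by
    refine ⟨fun p => ⟨IsometryEquiv.refl _, rfl⟩, ?_, ?_⟩
    · rintro p q ⟨e, he⟩
      exact ⟨e.symm, by rw [← he, IsometryEquiv.symm_apply_apply]⟩
    · rintro p q r ⟨e, he⟩ ⟨f, hf⟩
      exact ⟨e.trans f, by rw [IsometryEquiv.trans_apply, he, hf]⟩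

/-- `𝒫ℳ`: the space of pointed isometry classes of pointed proper metric
spaces, with the (quotient of the) pointed Gromov–Hausdorff topology. -/
def PGHSpace : Type 1 := Quotient pointedIsometrySetoid

instance : TopologicalSpace PGHSpace :=
  instTopologicalSpaceQuotient

/-- The pointed isometry class of a pointed proper metric space. -/
def PGHSpace.mk (X : Type) [MetricSpace X] [ProperSpace X] (a : X) : PGHSpace :=
  Quotient.mk pointedIsometrySetoid ⟨X, a⟩

/-- `𝒫𝒵`: the subset of `𝒫ℳ` consisting of pointed proper CAT(0)
spaces. -/
def PGHCat0 : Set PGHSpace :=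
  {x | IsCAT0Space (Quotient.out (α := PointedProperMetricSpace) x).carrier}

/-- A topological space has covering dimension at most `n` if every open cover
admits an open refinement that still covers the space and in which every point
lies in at most `n + 1` members of the refinement. -/
def CovDimLE (X : Type*) [TopologicalSpace X] (n : ℕ) : Prop :=
  ∀ U : Set (Set X), (∀ u ∈ U, IsOpen u) → ⋃₀ U = Set.univ →
    ∃ V : Set (Set X), (∀ w ∈ V, IsOpen w) ∧ ⋃₀ V = Set.univ ∧
      (∀ w ∈ V, ∃ u ∈ U, w ⊆ u) ∧
      ∀ x : X, {w ∈ V | x ∈ w}.encard ≤ (n : ℕ∞) + 1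

/-! Admissible metrics can be glued along a common space, so `d_pGH` is a pseudometric on pointed
proper spaces.

Closed balls in a CAT(0) space are CAT(0), depend Lipschitz continuously on the radius, converge to
the whole space as the radius tends to infinity and shrink to the one-point space as it tends to
zero. This joins every pointed proper CAT(0) space to the one-point space.

Given a nonempty open set of CAT(0) spaces and `N`, truncate one of its elements to a large closed
ball `Y` and glue `N` short segments to `Y` at a point farthest from the base point. Varying the
lengths of these hairs gives a continuous image of the `N`-cube in the open set. When a hair grows
across its range, the number of points which are far from the base point and from each other
increases, so opposite faces of the cube have images at positive distance. By the Lebesgue covering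
theorem the open set then has dimension at least `N`.

The covering theorem itself follows from a degree argument: a `C¹` map of the cube preserving each
face has Jacobian integral `1`, since the integral is polynomial along the straight homotopy from
the identity and equal to `1` for small times, whereas the map built from a partition of unity with
at most `N` overlaps has a singular differential everywhere in the interior. -/

/-! ### Cross distances -/

/-- The cross distances `k x y` between a point of `X` and a point of `Y` for some pseudometric on
`X ⊕ Y` extending the metrics of `X` and `Y`. -/
structure IsCrossDist {X Y : Type*} [MetricSpace X] [MetricSpace Y] (k : X → Y → ℝ) : Prop where
  le_dist_add : ∀ x x' y, k x y ≤ dist x x' + k x' y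
  le_add_dist : ∀ x y y', k x y ≤ k x y' + dist y' y
  dist_left_le : ∀ x x' y, dist x x' ≤ k x y + k x' y
  dist_right_le : ∀ x y y', dist y y' ≤ k x y + k x y'

/-- The cross distances of a `(t; a, b)`-admissible metric, except that distances `0` between points
of `X` and points of `Y` are allowed. -/
structure IsCrossApprox {X Y : Type*} [MetricSpace X] [MetricSpace Y] (k : X → Y → ℝ)
    (a : X) (b : Y) (t : ℝ) : Prop extends IsCrossDist k where
  base_lt : k a b < t
  exists_right : ∀ x, dist a x ≤ t⁻¹ → ∃ y, k x y < t
  exists_left : ∀ y, dist b y ≤ t⁻¹ → ∃ x, k x y < t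

section CrossDist

variable {X Y Z : Type*} [MetricSpace X] [MetricSpace Y] [MetricSpace Z]

namespace IsCrossDist

variable {k : X → Y → ℝ} {l : Y → Z → ℝ}

lemma nonneg (hk : IsCrossDist k) (x : X) (y : Y) : 0 ≤ k x y := by
  have := hk.dist_left_le x x y
  rw [dist_self] at this
  linarith

lemma swap (hk : IsCrossDist k) : IsCrossDist fun y x => k x y where
  le_dist_add y y' x := by linarith [hk.le_add_dist x y y', dist_comm y y']
  le_add_dist y x x' := by linarith [hk.le_dist_add x x' y, dist_comm x x']
  dist_left_le y y' x := hk.dist_right_le x y y'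
  dist_right_le y x x' := hk.dist_left_le x x' y

lemma bddBelow_range_add (hk : IsCrossDist k) (hl : IsCrossDist l) (x : X) (z : Z) :
    BddBelow (Set.range fun y => k x y + l y z) :=
  ⟨0, Set.forall_mem_range.2 fun y => add_nonneg (hk.nonneg x y) (hl.nonneg y z)⟩

lemma comp [Nonempty Y] (hk : IsCrossDist k) (hl : IsCrossDist l) :
    IsCrossDist fun x z => ⨅ y, k x y + l y z where
  le_dist_add x x' z := by
    rw [← sub_le_iff_le_add']
    refine le_ciInf fun y => ?_
    linarith [ciInf_le (hk.bddBelow_range_add hl x z) y, hk.le_dist_add x x' y]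
  le_add_dist x z z' := by
    rw [← sub_le_iff_le_add]
    refine le_ciInf fun y => ?_
    linarith [ciInf_le (hk.bddBelow_range_add hl x z) y, hl.le_add_dist y z z']
  dist_left_le x x' z := le_ciInf_add_ciInf fun y y' => by
    linarith [hk.dist_left_le x x' y, hk.le_add_dist x' y y', hl.dist_left_le y y' z,
      dist_comm y y']
  dist_right_le x z z' := le_ciInf_add_ciInf fun y y' => by
    linarith [hl.dist_right_le y z z', hl.le_dist_add y y' z', hk.dist_right_le x y y']

end IsCrossDist

namespace IsCrossApprox

variable {k : X → Y → ℝ} {l : Y → Z → ℝ} {a : X} {b : Y} {c : Z} {s t : ℝ}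

lemma pos (hk : IsCrossApprox k a b t) : 0 < t :=
  (hk.nonneg a b).trans_lt hk.base_lt

lemma swap (hk : IsCrossApprox k a b t) : IsCrossApprox (fun y x => k x y) b a t :=
  ⟨hk.toIsCrossDist.swap, hk.base_lt, hk.exists_left, hk.exists_right⟩

lemma mono (hk : IsCrossApprox k a b s) (hst : s ≤ t) : IsCrossApprox k a b t where
  toIsCrossDist := hk.toIsCrossDist
  base_lt := hk.base_lt.trans_le hst
  exists_right x hx :=
    (hk.exists_right x (hx.trans (inv_anti₀ hk.pos hst))).imp fun _ h => h.trans_le hst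
  exists_left y hy :=
    (hk.exists_left y (hy.trans (inv_anti₀ hk.pos hst))).imp fun _ h => h.trans_le hst

/-- This is where the truncation of the distance at `1 / 2` is needed. -/
lemma two_mul_add_inv_le (hs : 0 < s) (ht : 0 ≤ t) (hts : t + s ≤ 1 / 2) :
    2 * t + (t + s)⁻¹ ≤ s⁻¹ := by
  have hid : s⁻¹ - (2 * t + (t + s)⁻¹) = t * (1 - 2 * (s * (t + s))) / (s * (t + s)) := by
    field_simp
    ring
  have hsmall : 0 ≤ 1 - 2 * (s * (t + s)) := by nlinarith
  rw [← sub_nonneg, hid]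
  positivity

lemma exists_right_comp (hk : IsCrossApprox k a b t) (hl : IsCrossApprox l b c s)
    (hts : t + s ≤ 1 / 2) {x : X} (hx : dist a x ≤ (t + s)⁻¹) :
    ∃ z, ⨅ y, k x y + l y z < t + s := by
  obtain ⟨y, hy⟩ := hk.exists_right x (hx.trans (inv_anti₀ hk.pos (by linarith [hl.pos])))
  have hby : dist b y ≤ s⁻¹ := by
    linarith [hk.dist_right_le a b y, hk.le_dist_add a x y, hk.base_lt,
      two_mul_add_inv_le hl.pos hk.pos.le hts]
  obtain ⟨z, hz⟩ := hl.exists_right y hby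
  exact ⟨z, (ciInf_le (hk.bddBelow_range_add hl.toIsCrossDist x z) y).trans_lt
    (add_lt_add hy hz)⟩

lemma comp (hk : IsCrossApprox k a b t) (hl : IsCrossApprox l b c s) (hts : t + s ≤ 1 / 2) :
    IsCrossApprox (fun x z => ⨅ y, k x y + l y z) a c (t + s) where
  toIsCrossDist := have : Nonempty Y := ⟨b⟩; hk.toIsCrossDist.comp hl.toIsCrossDist
  base_lt := (ciInf_le (hk.bddBelow_range_add hl.toIsCrossDist a c) b).trans_lt
    (add_lt_add hk.base_lt hl.base_lt)
  exists_right _ hx := hk.exists_right_comp hl hts hx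
  exists_left z hz := by
    simp only [add_comm _ (l _ z), add_comm t] at hz hts ⊢
    exact hl.swap.exists_right_comp hk.swap hts hz

lemma of_isAdmissiblePair {h : X ⊕ Y → X ⊕ Y → ℝ} (H : IsAdmissiblePair a b t h) :
    IsCrossApprox (fun x y => h (.inl x) (.inr y)) a b t := by
  obtain ⟨-, hsymm, htri, hX, hY, hbase, hright, hleft⟩ := H
  refine ⟨⟨fun x x' y => ?_, fun x y y' => ?_, fun x x' y => ?_, fun x y y' => ?_⟩, hbase,
    fun x hx => hright _ (by rwa [hX]), fun y hy => ?_⟩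
  · exact hX x x' ▸ htri _ _ _
  · exact hY y' y ▸ htri _ _ _
  · exact hX x x' ▸ hsymm (.inl x') (.inr y) ▸ htri _ _ _
  · exact hY y y' ▸ hsymm (.inl x) (.inr y) ▸ htri _ _ _
  · obtain ⟨x, hx⟩ := hleft (.inr y) (by rwa [hY])
    exact ⟨x, by rwa [hsymm]⟩

/-- Adding `t - s` to all cross distances turns the pseudometric into a metric. -/
lemma exists_isAdmissiblePair (hk : IsCrossApprox k a b s) (hst : s < t) :
    ∃ h, IsAdmissiblePair a b t h := by
  have hinv : t⁻¹ ≤ s⁻¹ := inv_anti₀ hk.pos hst.le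
  have ht : 0 < t := hk.pos.trans hst
  let h : X ⊕ Y → X ⊕ Y → ℝ
    | .inl x, .inl x' => dist x x'
    | .inr y, .inr y' => dist y y'
    | .inl x, .inr y => k x y + (t - s)
    | .inr y, .inl x => k x y + (t - s)
  have lt_of_lt {x y} (hxy : k x y < s) : k x y + (t - s) < t := by linarith
  refine ⟨h, ?_, ?_, ?_, fun _ _ => rfl, fun _ _ => rfl, lt_of_lt hk.base_lt, ?_, ?_⟩
  · rintro (x | x) (y | y) <;>
      simp only [h, dist_eq_zero, Sum.inl.injEq, Sum.inr.injEq, reduceCtorEq, iff_false]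
    · linarith [hk.nonneg x y]
    · linarith [hk.nonneg y x]
  · rintro (x | x) (y | y) <;> simp only [h, dist_comm]
  · rintro (x | x) (y | y) (z | z) <;> simp only [h]
    · exact dist_triangle _ _ _
    · linarith [hk.le_dist_add x y z]
    · linarith [hk.dist_left_le x z y]
    · linarith [hk.le_add_dist x z y]
    · linarith [hk.le_dist_add z y x, dist_comm z y]
    · linarith [hk.dist_right_le y x z]
    · linarith [hk.le_add_dist z x y, dist_comm y x]
    · exact dist_triangle _ _ _
  · rintro (x | y) hx
    · exact (hk.exists_right x (hx.trans hinv)).imp fun _ => lt_of_lt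
    · exact ⟨y, by simpa only [h, dist_self] using ht⟩
  · rintro (x | y) hy
    · exact ⟨x, by simpa only [h, dist_self] using ht⟩
    · exact (hk.exists_left y (hy.trans hinv)).imp fun _ => lt_of_lt

end IsCrossApprox

end CrossDist

section PGHDist

variable {p q r : PointedProperMetricSpace} {t : ℝ}

lemma pghDist_nonneg (p q : PointedProperMetricSpace) : 0 ≤ pghDist p q :=
  Real.sInf_nonneg <| Set.forall_mem_insert.2 ⟨by norm_num, fun _ ht => ht.1.le⟩

lemma bddBelow_admissible {X Y : Type*} [MetricSpace X] [MetricSpace Y] (a : X) (b : Y) :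
    BddBelow (insert (1 / 2 : ℝ) {t | 0 < t ∧ ∃ h, IsAdmissiblePair a b t h}) :=
  ⟨0, Set.forall_mem_insert.2 ⟨by norm_num, fun _ ht => ht.1.le⟩⟩

lemma pghDist_le_half (p q : PointedProperMetricSpace) : pghDist p q ≤ 1 / 2 :=
  csInf_le (bddBelow_admissible _ _) (Set.mem_insert _ _)

lemma IsCrossApprox.pghDist_le {k : p.carrier → q.carrier → ℝ}
    (hk : IsCrossApprox k p.pt q.pt t) : pghDist p q ≤ t :=
  le_of_forall_gt_imp_ge_of_dense fun _ ht' => csInf_le (bddBelow_admissible _ _)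
    (Set.mem_insert_of_mem _ ⟨hk.pos.trans ht', hk.exists_isAdmissiblePair ht'⟩)

lemma exists_isCrossApprox_of_pghDist_lt (ht : t ≤ 1 / 2) (h : pghDist p q < t) :
    ∃ k, IsCrossApprox k p.pt q.pt t := by
  obtain ⟨s, rfl | ⟨-, h, H⟩, hst⟩ := exists_lt_of_csInf_lt ⟨_, Set.mem_insert _ _⟩ h
  · exact absurd hst ht.not_gt
  · exact ⟨_, (IsCrossApprox.of_isAdmissiblePair H).mono hst.le⟩

lemma pghDist_comm (p q : PointedProperMetricSpace) : pghDist p q = pghDist q p := by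
  have pghDist_le_swap (p q : PointedProperMetricSpace) : pghDist p q ≤ pghDist q p := by
    by_contra! hlt
    obtain ⟨t, hqt, htp⟩ := exists_between hlt
    obtain ⟨k, hk⟩ := exists_isCrossApprox_of_pghDist_lt (htp.le.trans (pghDist_le_half p q)) hqt
    exact htp.not_ge hk.swap.pghDist_le
  exact (pghDist_le_swap p q).antisymm (pghDist_le_swap q p)

lemma pghDist_triangle (p q r : PointedProperMetricSpace) :
    pghDist p r ≤ pghDist p q + pghDist q r := by
  by_contra! hlt
  obtain ⟨s, hqs, hs⟩ := exists_between (lt_sub_iff_add_lt'.2 hlt)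
  obtain ⟨t, hpt, ht⟩ := exists_between (lt_sub_comm.1 hs)
  have hts : t + s < pghDist p r := lt_sub_iff_add_lt.1 ht
  have hhalf : t + s ≤ 1 / 2 := hts.le.trans (pghDist_le_half p r)
  obtain ⟨k, hk⟩ := exists_isCrossApprox_of_pghDist_lt
    (by linarith [pghDist_nonneg q r]) hpt
  obtain ⟨l, hl⟩ := exists_isCrossApprox_of_pghDist_lt
    (by linarith [pghDist_nonneg p q]) hqs
  exact hts.not_ge (hk.comp hl hhalf).pghDist_le

lemma pghDist_le_of_isometry {W : Type*} [PseudoMetricSpace W] {i : p.carrier → W}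
    {j : q.carrier → W} (hi : Isometry i) (hj : Isometry j) (hb : i p.pt = j q.pt) (ht : 0 < t)
    (hright : ∀ x, dist p.pt x ≤ t⁻¹ → ∃ y, dist (i x) (j y) < t)
    (hleft : ∀ y, dist q.pt y ≤ t⁻¹ → ∃ x, dist (i x) (j y) < t) : pghDist p q ≤ t := by
  refine IsCrossApprox.pghDist_le (k := fun x y => dist (i x) (j y))
    ⟨⟨fun x x' y => ?_, fun x y y' => ?_, fun x x' y => ?_, fun x y y' => ?_⟩, ?_, hright, hleft⟩
  · exact hi.dist_eq x x' ▸ dist_triangle _ _ _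
  · exact hj.dist_eq y' y ▸ dist_triangle _ _ _
  · exact hi.dist_eq x x' ▸ dist_triangle_right _ _ _
  · exact hj.dist_eq y y' ▸ dist_triangle_left _ _ _
  · rwa [hb, dist_self]

lemma pghDist_eq_zero_of_equiv (h : p ≈ q) : pghDist p q = 0 := by
  obtain ⟨e, he⟩ := h
  refine (le_of_forall_gt_imp_ge_of_dense fun t ht => ?_).antisymm (pghDist_nonneg p q)
  exact pghDist_le_of_isometry e.isometry isometry_id he ht
    (fun x _ => ⟨e x, by simpa only [id, dist_self] using ht⟩)
    (fun y _ => ⟨e.symm y, by simpa only [e.apply_symm_apply, id, dist_self] using ht⟩)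

end PGHDist

lemma topology_eq_generateFrom_balls {X : Type*} [m : PseudoMetricSpace X] :
    m.toUniformSpace.toTopologicalSpace =
      .generateFrom {s | ∃ (x : X) (ε : ℝ), 0 < ε ∧ s = {y | dist x y < ε}} := by
  have ball_eq (x : X) (ε : ℝ) : {y | dist x y < ε} = Metric.ball x ε :=
    Set.ext fun _ => Metric.mem_ball'.symm
  simp only [ball_eq]
  refine TopologicalSpace.IsTopologicalBasis.eq_generateFrom
    (TopologicalSpace.isTopologicalBasis_of_isOpen_of_nhds ?_ fun x O hx hO => ?_)
  · rintro _ ⟨x, ε, -, rfl⟩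
    exact Metric.isOpen_ball
  · obtain ⟨ε, hε, hsub⟩ := Metric.isOpen_iff.1 hO x hx
    exact ⟨_, ⟨x, ε, hε, rfl⟩, Metric.mem_ball_self hε, hsub⟩

namespace PointedProperMetricSpace

noncomputable instance : PseudoMetricSpace PointedProperMetricSpace :=
  PseudoMetricSpace.replaceTopology
    { dist := pghDist
      dist_self p := pghDist_eq_zero_of_equiv (Setoid.refl p)
      dist_comm := pghDist_comm
      dist_triangle := pghDist_triangle }
    (topology_eq_generateFrom_balls (m := _)).symm

variable {p q : PointedProperMetricSpace}

lemma inseparable_of_equiv (h : p ≈ q) : Inseparable p q :=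
  Metric.inseparable_iff.2 (pghDist_eq_zero_of_equiv h)

lemma exists_approx_isometry {t : ℝ} (ht : t ≤ 1 / 2) (h : dist p q < t) :
    ∃ w : p.carrier → q.carrier,
      (∀ x, dist p.pt x ≤ t⁻¹ → |dist q.pt (w x) - dist p.pt x| < 2 * t) ∧
      ∀ x x', dist p.pt x ≤ t⁻¹ → dist p.pt x' ≤ t⁻¹ →
        |dist (w x) (w x') - dist x x'| < 2 * t := by
  obtain ⟨k, hk⟩ := exists_isCrossApprox_of_pghDist_lt ht h
  have distortion {x x' y y'} (hx : k x y < t) (hx' : k x' y' < t) :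
      |dist y y' - dist x x'| < 2 * t := by
    rw [abs_sub_lt_iff]
    constructor
    · linarith [hk.dist_right_le x y y', hk.le_dist_add x x' y']
    · linarith [hk.dist_left_le x x' y, hk.le_add_dist x' y y', dist_comm y y']
  have : Nonempty q.carrier := ⟨q.pt⟩
  choose! w hw using hk.exists_right
  exact ⟨w, fun x hx => distortion hk.base_lt (hw x hx),
    fun x x' hx hx' => distortion (hw x hx) (hw x' hx')⟩

end PointedProperMetricSpace

/-! ### CAT(0) spaces -/

section CAT0

variable {X Y W : Type*} [MetricSpace X] [MetricSpace Y] [MetricSpace W]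

lemma IsCAT0Space.of_isometryEquiv (h : IsCAT0Space X) (e : X ≃ᵢ Y) : IsCAT0Space Y := by
  refine ⟨fun x y => ?_, fun x y z γ hx hy hγ t ht => ?_⟩
  · obtain ⟨γ, hx, hy, hγ⟩ := h.1 (e.symm x) (e.symm y)
    refine ⟨e ∘ γ, ?_, ?_, ?_⟩
    · rw [Function.comp_apply, hx, e.apply_symm_apply]
    · rw [Function.comp_apply, hy, e.apply_symm_apply]
    · simpa only [Function.comp_apply, e.dist_eq, e.symm.dist_eq] using hγ
  · have := h.2 (e.symm x) (e.symm y) (e.symm z) (e.symm ∘ γ) (by rw [Function.comp_apply, hx])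
      (by rw [Function.comp_apply, hy])
      (by simpa only [Function.comp_apply, e.symm.dist_eq] using hγ) t ht
    simpa only [Function.comp_apply, e.symm.dist_eq] using this

/-- A unit speed geodesic `σ` in `S` from `x` to `y` along which the CN inequality with respect to
all points of `S` holds, written in the denominator-free form of Stewart's theorem. -/
structure IsCNGeodesic (S : Set W) (x y : W) (σ : ℝ → W) : Prop where
  map_zero : σ 0 = x
  map_dist : σ (dist x y) = y
  mem : ∀ s ∈ Set.Icc 0 (dist x y), σ s ∈ S
  dist_eq : ∀ s ∈ Set.Icc 0 (dist x y), ∀ s' ∈ Set.Icc 0 (dist x y),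
    dist (σ s) (σ s') = |s - s'|
  stewart : ∀ z ∈ S, ∀ s ∈ Set.Icc 0 (dist x y),
    dist x y * dist z (σ s) ^ 2 ≤ (dist x y - s) * dist z x ^ 2 + s * dist z y ^ 2 -
      dist x y * (s * (dist x y - s))

lemma IsCAT0Space.exists_isCNGeodesic_range (h : IsCAT0Space X) {i : X → W} (hi : Isometry i)
    (x y : X) : ∃ σ, IsCNGeodesic (Set.range i) (i x) (i y) σ := by
  obtain ⟨γ, hx, hy, hγ⟩ := h.1 x y
  have hCN := fun z => h.2 x y z γ hx hy hγ
  have hl : 0 ≤ dist x y := dist_nonneg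
  have div_mem {s : ℝ} (hs : s ∈ Set.Icc 0 (dist x y)) : s / dist x y ∈ Set.Icc (0 : ℝ) 1 :=
    unitInterval.div_mem hs.1 hl hs.2
  have div_mul {s : ℝ} (hs : s ∈ Set.Icc 0 (dist x y)) : s / dist x y * dist x y = s :=
    div_mul_cancel_of_imp fun h0 => le_antisymm (h0 ▸ hs.2) hs.1
  refine ⟨fun s => i (γ (s / dist x y)), ?_, ?_, fun s _ => Set.mem_range_self _, ?_, ?_⟩
  · rw [zero_div, hx]
  · rcases eq_or_ne x y with rfl | hxy
    · rw [hi.dist_eq, dist_self, zero_div, hx]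
    · rw [hi.dist_eq, div_self (dist_ne_zero.2 hxy), hy]
  all_goals simp only [Set.forall_mem_range, hi.dist_eq]
  · intro s hs s' hs'
    rw [hγ _ (div_mem hs) _ (div_mem hs'), ← abs_of_nonneg hl, ← abs_mul, abs_of_nonneg hl, sub_mul,
      div_mul hs, div_mul hs']
  · intro z s hs
    have hz := mul_le_mul_of_nonneg_left (hCN z _ (div_mem hs)) hl
    have hts := div_mul hs
    generalize s / dist x y = t at hz hts
    subst hts
    linarith

lemma IsCNGeodesic.dist_left {S : Set W} {x y : W} {σ : ℝ → W} (h : IsCNGeodesic S x y σ)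
    {s : ℝ} (hs : s ∈ Set.Icc 0 (dist x y)) : dist x (σ s) = s := by
  have := h.dist_eq 0 (Set.left_mem_Icc.2 dist_nonneg) s hs
  rwa [h.map_zero, zero_sub, abs_neg, abs_of_nonneg hs.1] at this

lemma IsCNGeodesic.dist_right {S : Set W} {x y : W} {σ : ℝ → W} (h : IsCNGeodesic S x y σ)
    {s : ℝ} (hs : s ∈ Set.Icc 0 (dist x y)) : dist (σ s) y = dist x y - s := by
  have := h.dist_eq s hs _ (Set.right_mem_Icc.2 dist_nonneg)
  rwa [h.map_dist, abs_sub_comm, abs_of_nonneg (sub_nonneg.2 hs.2)] at this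

lemma IsCNGeodesic.mul_dist_le {S : Set W} {x y z : W} {σ : ℝ → W} (h : IsCNGeodesic S x y σ)
    (hz : z ∈ S) {s : ℝ} (hs : s ∈ Set.Icc 0 (dist x y)) :
    dist x y * dist z (σ s) ≤ (dist x y - s) * dist z x + s * dist z y := by
  have hcoef : 0 ≤ s * (dist x y - s) := mul_nonneg hs.1 (sub_nonneg.2 hs.2)
  have htri : (dist z x - dist z y) ^ 2 ≤ dist x y ^ 2 := by
    rw [sq_le_sq, abs_of_nonneg (dist_nonneg (x := x) (y := y)), dist_comm z x, dist_comm z y]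
    exact abs_dist_sub_le x y z
  have hstewart := mul_le_mul_of_nonneg_left (h.stewart z hz s hs) (dist_nonneg (x := x) (y := y))
  have hs' : 0 ≤ dist x y - s := sub_nonneg.2 hs.2
  have hs0 : 0 ≤ s := hs.1
  refine (sq_le_sq₀ (by positivity) (by positivity)).1 ?_
  linarith [mul_le_mul_of_nonneg_left htri hcoef]

lemma IsCNGeodesic.exists_geodesic {S : Set W} {x y : S} {σ : ℝ → W}
    (h : IsCNGeodesic S x y σ) : ∃ γ : ℝ → S, γ 0 = x ∧ γ 1 = y ∧
      (∀ s ∈ Set.Icc (0 : ℝ) 1, ∀ t ∈ Set.Icc (0 : ℝ) 1,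
        dist (γ s) (γ t) = |s - t| * dist x y) ∧
      ∀ z : S, ∀ t ∈ Set.Icc (0 : ℝ) 1, dist z (γ t) ^ 2 ≤
        (1 - t) * dist z x ^ 2 + t * dist z y ^ 2 - t * (1 - t) * dist x y ^ 2 := by
  classical
  set l := dist (x : W) y with hl
  have hl0 : 0 ≤ l := dist_nonneg
  have mul_mem {t : ℝ} (ht : t ∈ Set.Icc (0 : ℝ) 1) : t * l ∈ Set.Icc 0 l :=
    ⟨mul_nonneg ht.1 hl0, mul_le_of_le_one_left hl0 ht.2⟩
  let γ : ℝ → S := fun t => if ht : t ∈ Set.Icc (0 : ℝ) 1 then ⟨σ (t * l), h.mem _ (mul_mem ht)⟩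
    else x
  have γ_eq {t : ℝ} (ht : t ∈ Set.Icc (0 : ℝ) 1) : (γ t : W) = σ (t * l) := by
    simp only [γ, dif_pos ht]
  refine ⟨γ, Subtype.ext ?_, Subtype.ext ?_, fun s hs t ht => ?_, fun z t ht => ?_⟩
  · rw [γ_eq (by simp), zero_mul, h.map_zero]
  · rw [γ_eq (by simp), one_mul, h.map_dist]
  · rw [Subtype.dist_eq, γ_eq hs, γ_eq ht, h.dist_eq _ (mul_mem hs) _ (mul_mem ht), ← sub_mul,
      abs_mul, abs_of_nonneg hl0, Subtype.dist_eq]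
  · simp only [Subtype.dist_eq, γ_eq ht, ← hl]
    have hstewart := h.stewart z z.2 _ (mul_mem ht)
    rw [← hl] at hstewart
    rcases hl0.eq_or_lt with h0 | hpos
    · have hxy : (x : W) = y := dist_eq_zero.1 h0.symm
      rw [← h0, mul_zero, h.map_zero, ← hxy]
      linarith
    · refine le_of_mul_le_mul_left ?_ hpos
      linarith

lemma isCAT0Space_of_forall_isCNGeodesic {S : Set W}
    (h : ∀ x ∈ S, ∀ y ∈ S, ∃ σ, IsCNGeodesic S x y σ) : IsCAT0Space S := by
  have exists_geodesic (x y : S) := (h x x.2 y y.2).choose_spec.exists_geodesic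
  refine ⟨fun x y => ?_, fun x y z γ hx hy hγ t ht => ?_⟩
  · obtain ⟨γ, hx, hy, hγ, -⟩ := exists_geodesic x y
    exact ⟨γ, hx, hy, hγ⟩
  · obtain ⟨γ', -, -, -, hCN⟩ := exists_geodesic x y
    have hγx : dist (γ t) x = t * dist x y := by
      rw [← hx, hγ t ht 0 (by simp), sub_zero, abs_of_nonneg ht.1, hx]
    have hγy : dist (γ t) y = (1 - t) * dist x y := by
      rw [← hy, hγ t ht 1 (by simp), abs_sub_comm, abs_of_nonneg (sub_nonneg.2 ht.2), hy]
    have hsq : dist (γ t) (γ' t) ^ 2 ≤ 0 := by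
      have := hCN (γ t) t ht
      rw [hγx, hγy] at this
      linarith
    have heq : γ t = γ' t := dist_eq_zero.1 (pow_eq_zero_iff two_ne_zero |>.1
      (hsq.antisymm (sq_nonneg _)))
    exact heq ▸ hCN z t ht

/-- Comparison along the first leg of a path glued at `o`: `a` and `b` are the distances from `z`
to `x` and to `o`, and `z` lies on the side of `x`. -/
lemma stewart_glue_near {a b l₁ l₂ s P : ℝ} (hl₁ : 0 < l₁) (hl₂ : 0 ≤ l₂) (hs : 0 ≤ s)
    (hab : |b - l₁| ≤ a) (hP : l₁ * P ≤ (l₁ - s) * a ^ 2 + s * b ^ 2 - l₁ * (s * (l₁ - s))) :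
    (l₁ + l₂) * P ≤ (l₁ + l₂ - s) * a ^ 2 + s * (b + l₂) ^ 2 -
      (l₁ + l₂) * (s * (l₁ + l₂ - s)) := by
  have htri : 0 ≤ a ^ 2 - (b - l₁) ^ 2 := sub_nonneg.2 (sq_le_sq.2 (hab.trans (le_abs_self a)))
  have hgain : 0 ≤ s * l₂ * (a ^ 2 - (b - l₁) ^ 2) := by positivity
  refine le_of_mul_le_mul_left ?_ hl₁
  linarith [mul_le_mul_of_nonneg_left hP (add_nonneg hl₁.le hl₂)]

lemma stewart_glue_far {a b l₁ l₂ s : ℝ} (hs : s ≤ l₁ + l₂) (hab : |b - l₁| ≤ a) :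
    (l₁ + l₂) * (b + (s - l₁)) ^ 2 ≤ (l₁ + l₂ - s) * a ^ 2 + s * (b + l₂) ^ 2 -
      (l₁ + l₂) * (s * (l₁ + l₂ - s)) := by
  have htri : 0 ≤ a ^ 2 - (b - l₁) ^ 2 := sub_nonneg.2 (sq_le_sq.2 (hab.trans (le_abs_self a)))
  linarith [mul_nonneg (sub_nonneg.2 hs) htri]

variable {A C : Set W} {o x y : W}

lemma IsCNGeodesic.union_left {σ : ℝ → W} (hσ : IsCNGeodesic A x y σ) (ho : o ∈ A) (hx : x ∈ A)
    (hy : y ∈ A) (hd : ∀ x ∈ A, ∀ c ∈ C, dist x c = dist x o + dist o c) :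
    IsCNGeodesic (A ∪ C) x y σ where
  map_zero := hσ.map_zero
  map_dist := hσ.map_dist
  mem s hs := .inl (hσ.mem s hs)
  dist_eq := hσ.dist_eq
  stewart := by
    rintro z (hz | hz) s hs
    · exact hσ.stewart z hz s hs
    · have dist_z {w : W} (hw : w ∈ A) : dist z w = dist o w + dist o z := by
        rw [dist_comm z w, hd w hw z hz, dist_comm w o]
      rw [dist_z (hσ.mem s hs), dist_z hx, dist_z hy]
      linarith [hσ.stewart o ho s hs,
        mul_le_mul_of_nonneg_left (hσ.mul_dist_le ho hs) (dist_nonneg (x := o) (y := z))]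

lemma IsCNGeodesic.stewart_glue {σ₁ σ₂ : ℝ → W} (h₁ : IsCNGeodesic A x o σ₁)
    (h₂ : IsCNGeodesic C o y σ₂) (hxo : x ≠ o) (hx : x ∈ A) (hy : y ∈ C)
    (hd : ∀ x ∈ A, ∀ c ∈ C, dist x c = dist x o + dist o c) {z : W} (hz : z ∈ A ∪ C) {s : ℝ}
    (hs : s ∈ Set.Icc 0 (dist x y)) :
    dist x y * dist z (if s ≤ dist x o then σ₁ s else σ₂ (s - dist x o)) ^ 2 ≤
      (dist x y - s) * dist z x ^ 2 + s * dist z y ^ 2 - dist x y * (s * (dist x y - s)) := by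
  have hl₁ : 0 < dist x o := dist_pos.2 hxo
  have hl₂ : 0 ≤ dist o y := dist_nonneg
  have hL : dist x y = dist x o + dist o y := hd x hx y hy
  have mem₁ (h : s ≤ dist x o) : s ∈ Set.Icc 0 (dist x o) := ⟨hs.1, h⟩
  have mem₂ (h : ¬s ≤ dist x o) : s - dist x o ∈ Set.Icc 0 (dist o y) :=
    ⟨by linarith, by linarith [hs.2]⟩
  rcases hz with hz | hz
  · have hab : |dist z o - dist x o| ≤ dist z x := abs_dist_sub_le z x o
    rw [hd z hz y hy, hL]
    split_ifs with h
    · exact stewart_glue_near hl₁ hl₂ hs.1 hab (h₁.stewart z hz s (mem₁ h))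
    · rw [hd z hz _ (h₂.mem _ (mem₂ h)), h₂.dist_left (mem₂ h)]
      exact stewart_glue_far (hL ▸ hs.2) hab
  · have hab : |dist z o - dist o y| ≤ dist z y := by
      rw [dist_comm o y]
      exact abs_dist_sub_le z y o
    have dist_z {w} (hw : w ∈ A) : dist z w = dist z o + dist w o := by
      rw [dist_comm z w, hd w hw z hz, dist_comm o z, add_comm]
    have hsL : 0 ≤ dist x o + dist o y - s := by linarith [hs.2]
    rw [dist_z hx, hL]
    split_ifs with h
    · rw [dist_z (h₁.mem s (mem₁ h)), h₁.dist_right (mem₁ h)]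
      have := stewart_glue_far (l₁ := dist o y) (l₂ := dist x o) (s := dist x o + dist o y - s)
        (by linarith [hs.1]) hab
      ring_nf at this ⊢
      exact this
    · have hl₂' : 0 < dist o y := by linarith [hs.2]
      have := stewart_glue_near (s := dist x o + dist o y - s) hl₂' hl₁.le hsL hab
        (P := dist z (σ₂ (s - dist x o)) ^ 2) (by linarith [h₂.stewart z hz _ (mem₂ h)])
      ring_nf at this ⊢
      exact this

lemma IsCNGeodesic.glue {σ₁ σ₂ : ℝ → W} (h₁ : IsCNGeodesic A x o σ₁) (h₂ : IsCNGeodesic C o y σ₂)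
    (hxo : x ≠ o) (hx : x ∈ A) (hy : y ∈ C)
    (hd : ∀ x ∈ A, ∀ c ∈ C, dist x c = dist x o + dist o c) :
    IsCNGeodesic (A ∪ C) x y fun s => if s ≤ dist x o then σ₁ s else σ₂ (s - dist x o) := by
  have hl₁ : 0 < dist x o := dist_pos.2 hxo
  have hl₂ : 0 ≤ dist o y := dist_nonneg
  have hL : dist x y = dist x o + dist o y := hd x hx y hy
  have mem₁ {s} (hs : s ∈ Set.Icc 0 (dist x y)) (h : s ≤ dist x o) : s ∈ Set.Icc 0 (dist x o) :=
    ⟨hs.1, h⟩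
  have mem₂ {s} (hs : s ∈ Set.Icc 0 (dist x y)) (h : ¬s ≤ dist x o) :
      s - dist x o ∈ Set.Icc 0 (dist o y) :=
    ⟨by linarith, by linarith [hs.2]⟩
  have dist_across {s s'} (hs : s ∈ Set.Icc 0 (dist x y)) (hs' : s' ∈ Set.Icc 0 (dist x y))
      (h : s ≤ dist x o) (h' : ¬s' ≤ dist x o) :
      dist (σ₁ s) (σ₂ (s' - dist x o)) = |s - s'| := by
    rw [hd _ (h₁.mem _ (mem₁ hs h)) _ (h₂.mem _ (mem₂ hs' h')), h₁.dist_right (mem₁ hs h),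
      h₂.dist_left (mem₂ hs' h'), abs_of_neg (by linarith)]
    ring
  refine ⟨?_, ?_, fun s hs => ?_, fun s hs s' hs' => ?_, ?_⟩
  · simp only [hl₁.le, if_true, h₁.map_zero]
  · split_ifs with h
    · have hoy : o = y := dist_eq_zero.1 (by linarith)
      rw [← hoy, h₁.map_dist]
    · rw [hL, add_sub_cancel_left, h₂.map_dist]
  · split_ifs with h
    exacts [.inl (h₁.mem s (mem₁ hs h)), .inr (h₂.mem _ (mem₂ hs h))]
  · split_ifs with h h' h'
    · exact h₁.dist_eq s (mem₁ hs h) s' (mem₁ hs' h')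
    · exact dist_across hs hs' h h'
    · rw [dist_comm, abs_sub_comm]
      exact dist_across hs' hs h' h
    · rw [h₂.dist_eq _ (mem₂ hs h) _ (mem₂ hs' h'), sub_sub_sub_cancel_right]
  exact fun z hz s hs => h₁.stewart_glue h₂ hxo hx hy hd hz hs

lemma IsCAT0Space.exists_isCNGeodesic (h : IsCAT0Space A) (hx : x ∈ A) (hy : y ∈ A) :
    ∃ σ, IsCNGeodesic A x y σ := by
  have := h.exists_isCNGeodesic_range isometry_subtype_coe ⟨x, hx⟩ ⟨y, hy⟩
  rwa [Subtype.range_coe] at this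

lemma exists_isCNGeodesic_union (hA : IsCAT0Space A) (hC : IsCAT0Space C) (hoA : o ∈ A)
    (hoC : o ∈ C) (hd : ∀ x ∈ A, ∀ c ∈ C, dist x c = dist x o + dist o c) (hx : x ∈ A)
    (hy : y ∈ A ∪ C) : ∃ σ, IsCNGeodesic (A ∪ C) x y σ := by
  have hd' : ∀ c ∈ C, ∀ x ∈ A, dist c x = dist c o + dist o x := fun c hc x hx => by
    rw [dist_comm c x, hd x hx c hc, add_comm, dist_comm o c, dist_comm x o]
  rcases hy with hy | hy
  · obtain ⟨σ, hσ⟩ := hA.exists_isCNGeodesic hx hy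
    exact ⟨σ, hσ.union_left hoA hx hy hd⟩
  obtain ⟨σ₂, h₂⟩ := hC.exists_isCNGeodesic hoC hy
  rcases eq_or_ne x o with rfl | hxo
  · exact ⟨σ₂, Set.union_comm A C ▸ h₂.union_left hoC hoC hy hd'⟩
  · obtain ⟨σ₁, h₁⟩ := hA.exists_isCNGeodesic hx hoA
    exact ⟨_, h₁.glue h₂ hxo hx hy hd⟩

theorem IsCAT0Space.union (hA : IsCAT0Space A) (hC : IsCAT0Space C) (hoA : o ∈ A) (hoC : o ∈ C)
    (hd : ∀ x ∈ A, ∀ c ∈ C, dist x c = dist x o + dist o c) : IsCAT0Space ↥(A ∪ C) := by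
  have hd' : ∀ c ∈ C, ∀ x ∈ A, dist c x = dist c o + dist o x := fun c hc x hx => by
    rw [dist_comm c x, hd x hx c hc, add_comm, dist_comm o c, dist_comm x o]
  refine isCAT0Space_of_forall_isCNGeodesic ?_
  rintro x (hx | hx) y hy
  · exact exists_isCNGeodesic_union hA hC hoA hoC hd hx hy
  · rw [Set.union_comm] at hy ⊢
    exact exists_isCNGeodesic_union hC hA hoC hoA hd' hx hy

lemma isCAT0Space_image_Icc {κ : ℝ → W} {l : ℝ}
    (hκ : ∀ s ∈ Set.Icc 0 l, ∀ s' ∈ Set.Icc 0 l, dist (κ s) (κ s') = |s - s'|) :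
    IsCAT0Space ↥(κ '' Set.Icc 0 l) := by
  refine isCAT0Space_of_forall_isCNGeodesic ?_
  rintro _ ⟨u, hu, rfl⟩ _ ⟨v, hv, rfl⟩
  obtain ⟨e, he, huv⟩ : ∃ e : ℝ, |e| = 1 ∧ u + e * |u - v| = v := by
    rcases le_total u v with h | h
    · exact ⟨1, abs_one, by rw [abs_sub_comm, abs_of_nonneg (sub_nonneg.2 h)]; ring⟩
    · exact ⟨-1, by rw [abs_neg, abs_one], by rw [abs_of_nonneg (sub_nonneg.2 h)]; ring⟩
  have he2 : e ^ 2 = 1 := by rw [← sq_abs, he, one_pow]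
  have hmem : ∀ s ∈ Set.Icc 0 |u - v|, u + e * s ∈ Set.Icc 0 l := by
    intro s hs
    rcases eq_or_eq_neg_of_abs_eq he with rfl | rfl <;>
      constructor <;> linarith [hu.1, hu.2, hv.1, hv.2, hs.1, hs.2]
  refine ⟨fun s => κ (u + e * s), ?_⟩
  rw [← hκ u hu v hv] at huv hmem
  refine ⟨by rw [mul_zero, add_zero], by rw [huv], fun s hs => ⟨_, hmem s hs, rfl⟩,
    fun s hs s' hs' => ?_, ?_⟩
  · rw [hκ _ (hmem s hs) _ (hmem s' hs'), add_sub_add_left_eq_sub, ← mul_sub, abs_mul, he, one_mul]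
  · rintro _ ⟨r, hr, rfl⟩ s hs
    rw [hκ r hr _ (hmem s hs), hκ r hr u hu, hκ r hr v hv, sq_abs, sq_abs, sq_abs]
    generalize dist (κ u) (κ v) = d at huv
    subst huv
    refine le_of_eq ?_
    linear_combination (s * d * (s - d)) * he2

end CAT0

/-! ### Truncation to balls -/

section ClosedBall

variable {X : Type*} [MetricSpace X]

lemma IsCAT0Space.closedBall (h : IsCAT0Space X) (a : X) (r : ℝ) :
    IsCAT0Space (Metric.closedBall a r) := by
  refine isCAT0Space_of_forall_isCNGeodesic fun x hx y hy => ?_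
  obtain ⟨σ, hσ⟩ : ∃ σ, IsCNGeodesic _ x y σ := h.exists_isCNGeodesic_range isometry_id x y
  refine ⟨σ, hσ.map_zero, hσ.map_dist, fun s hs => ?_, hσ.dist_eq,
    fun z _ => hσ.stewart z ⟨z, rfl⟩⟩
  rw [Metric.mem_closedBall'] at hx hy ⊢
  rcases (dist_nonneg (x := x) (y := y)).eq_or_lt with h0 | hpos
  · rw [← h0, Set.Icc_self, Set.mem_singleton_iff] at hs
    rwa [hs, hσ.map_zero]
  · refine le_of_mul_le_mul_left ?_ hpos
    linarith [hσ.mul_dist_le (z := a) ⟨a, rfl⟩ hs, mul_le_mul_of_nonneg_left hx (sub_nonneg.2 hs.2),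
      mul_le_mul_of_nonneg_left hy hs.1]

lemma IsCAT0Space.exists_mem_closedBall_dist_le (h : IsCAT0Space X) {a x : X} {r s : ℝ}
    (hs : 0 ≤ s) (hx : x ∈ Metric.closedBall a r) :
    ∃ y ∈ Metric.closedBall a s, dist x y ≤ |r - s| := by
  obtain ⟨σ, hσ⟩ : ∃ σ, IsCNGeodesic _ a x σ := h.exists_isCNGeodesic_range isometry_id a x
  have hmem : min s (dist a x) ∈ Set.Icc 0 (dist a x) :=
    ⟨le_min hs dist_nonneg, min_le_right _ _⟩
  rw [Metric.mem_closedBall'] at hx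
  refine ⟨σ (min s (dist a x)), ?_, ?_⟩
  · rw [Metric.mem_closedBall', hσ.dist_left hmem]
    exact min_le_left _ _
  · rw [dist_comm, hσ.dist_right hmem, sub_le_comm]
    exact le_min (by linarith [le_abs_self (r - s)]) (by linarith [abs_nonneg (r - s)])

end ClosedBall

lemma isCAT0Space_of_subsingleton (X : Type*) [MetricSpace X] [Subsingleton X] :
    IsCAT0Space X := by
  have hd (x y : X) : dist x y = 0 := by rw [Subsingleton.elim x y, dist_self]
  refine ⟨fun x y => ⟨fun _ => x, rfl, Subsingleton.elim _ _, ?_⟩, ?_⟩ <;> intros <;> simp [hd]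

lemma joinedIn_of_tendsto_atTop {X : Type*} [TopologicalSpace X] {S : Set X} {f : NNReal → X}
    {x : X} (hf : Continuous f) (hfS : ∀ r, f r ∈ S) (hx : x ∈ S)
    (hlim : Filter.Tendsto f Filter.atTop (nhds x)) : JoinedIn S (f 0) x := by
  let g : unitInterval → NNReal := fun u => (unitInterval.toNNReal u)⁻¹ - 1
  have hg : Filter.Tendsto g (nhdsWithin 0 {0}ᶜ) Filter.atTop := by
    have hnhds : Filter.Tendsto unitInterval.toNNReal (nhdsWithin 0 {0}ᶜ)
        (nhdsWithin 0 (Set.Ioi 0)) :=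
      tendsto_nhdsWithin_iff.2
        ⟨(unitInterval.toNNReal_continuous.tendsto' 0 0 rfl).mono_left nhdsWithin_le_nhds,
          eventually_mem_nhdsWithin.mono fun u hu => unitInterval.pos_iff_ne_zero.2 hu⟩
    exact Filter.tendsto_atTop.2 fun b => ((tendsto_inv_nhdsGT_zero.comp hnhds).eventually_ge_atTop
      (b + 1)).mono fun _ => le_tsub_of_add_le_right
  have hcont : Continuous (Function.update (f ∘ g) 0 x) := by
    refine continuous_iff_continuousAt.2 fun u => ?_
    rcases eq_or_ne u 0 with rfl | hu
    · exact continuousAt_update_same.2 (hlim.comp hg)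
    · have hu' : unitInterval.toNNReal u ≠ 0 := fun h => hu (Subtype.ext (congrArg NNReal.toReal h))
      exact (continuousAt_update_of_ne hu).2 <| hf.continuousAt.comp <|
        (unitInterval.toNNReal_continuous.continuousAt.inv₀ hu').sub continuousAt_const
  refine JoinedIn.symm ⟨⟨⟨_, hcont⟩, Function.update_self .., ?_⟩, fun u => ?_⟩
  · simp [g]
  · rcases eq_or_ne u 0 with rfl | hu
    · simpa using hx
    · simpa [hu] using hfS _

namespace PointedProperMetricSpace

/-- A compact subset `S` of a metric space, pointed at `o ∈ S`. -/
def ofIsCompact {W : Type} [MetricSpace W] {S : Set W} (hS : IsCompact S) {o : W} (ho : o ∈ S) :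
    PointedProperMetricSpace :=
  have : CompactSpace S := isCompact_iff_compactSpace.1 hS
  ⟨S, ⟨o, ho⟩⟩

lemma dist_ofIsCompact_le {W : Type} [MetricSpace W] {S T : Set W} (hS : IsCompact S)
    (hT : IsCompact T) {o : W} (hoS : o ∈ S) (hoT : o ∈ T) {t : ℝ} (ht : 0 ≤ t)
    (hright : ∀ x ∈ S, ∃ y ∈ T, dist x y ≤ t) (hleft : ∀ y ∈ T, ∃ x ∈ S, dist x y ≤ t) :
    dist (ofIsCompact hS hoS) (ofIsCompact hT hoT) ≤ t := by
  refine le_of_forall_gt_imp_ge_of_dense fun t' htt' => ?_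
  refine pghDist_le_of_isometry (W := W) (i := Subtype.val) (j := Subtype.val)
    isometry_subtype_coe isometry_subtype_coe rfl (ht.trans_lt htt') ?_ ?_
  · rintro ⟨x, hx⟩ -
    obtain ⟨y, hy, hxy⟩ := hright x hx
    exact ⟨⟨y, hy⟩, hxy.trans_lt htt'⟩
  · rintro ⟨y, hy⟩ -
    obtain ⟨x, hx, hxy⟩ := hleft y hy
    exact ⟨⟨x, hx⟩, hxy.trans_lt htt'⟩

variable {p : PointedProperMetricSpace}

/-- The closed ball of radius `r` around the base point of `p`. -/
def truncate (p : PointedProperMetricSpace) (r : NNReal) : PointedProperMetricSpace :=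
  ofIsCompact (isCompact_closedBall p.pt (r : ℝ)) (Metric.mem_closedBall_self r.2)

lemma lipschitzWith_truncate (hp : IsCAT0Space p.carrier) : LipschitzWith 1 p.truncate := by
  refine LipschitzWith.mk_one fun r s => ?_
  rw [NNReal.dist_eq]
  refine dist_ofIsCompact_le _ _ _ _ (abs_nonneg _)
    (fun x hx => hp.exists_mem_closedBall_dist_le s.2 hx) fun y hy => ?_
  obtain ⟨x, hx, hxy⟩ := hp.exists_mem_closedBall_dist_le r.2 hy
  exact ⟨x, hx, by rwa [dist_comm, abs_sub_comm]⟩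

lemma dist_truncate_le (p : PointedProperMetricSpace) {r : NNReal} (hr : 0 < r) :
    dist (p.truncate r) p ≤ (r : ℝ)⁻¹ := by
  have hr' : 0 < (r : ℝ)⁻¹ := by positivity
  refine pghDist_le_of_isometry (W := p.carrier) (i := Subtype.val) isometry_subtype_coe
    isometry_id rfl hr' (fun x _ => ⟨x.1, by rwa [id, dist_self]⟩) fun y hy => ?_
  rw [inv_inv] at hy
  exact ⟨⟨y, Metric.mem_closedBall'.2 hy⟩, by rwa [id, dist_self]⟩

lemma tendsto_truncate (p : PointedProperMetricSpace) :
    Filter.Tendsto p.truncate Filter.atTop (nhds p) := by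
  refine tendsto_iff_dist_tendsto_zero.2 <| squeeze_zero' (.of_forall fun _ => dist_nonneg)
    ((Filter.eventually_gt_atTop 0).mono fun r hr => p.dist_truncate_le hr) ?_
  exact tendsto_inv_atTop_zero.comp (NNReal.tendsto_coe_atTop.2 Filter.tendsto_id)

/-- The one-point space. -/
def onePoint : PointedProperMetricSpace := ⟨PUnit, PUnit.unit⟩

lemma truncate_zero_equiv (p : PointedProperMetricSpace) : p.truncate 0 ≈ onePoint := by
  have eq_pt (x : (p.truncate 0).carrier) : (p.truncate 0).pt = x :=
    Subtype.ext (dist_le_zero.1 (Metric.mem_closedBall'.1 x.2))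
  refine ⟨IsometryEquiv.mk' (fun _ => PUnit.unit) (fun _ => (p.truncate 0).pt)
    (fun _ => rfl) (Isometry.of_dist_eq fun x y => ?_), rfl⟩
  rw [← eq_pt x, ← eq_pt y, dist_self]
  exact dist_self _

theorem isPathConnected_isCAT0Space :
    IsPathConnected {p : PointedProperMetricSpace | IsCAT0Space p.carrier} := by
  refine ⟨onePoint, isCAT0Space_of_subsingleton PUnit, fun {p} hp => ?_⟩
  have hcat : IsCAT0Space onePoint.carrier := isCAT0Space_of_subsingleton PUnit
  exact (inseparable_of_equiv p.truncate_zero_equiv).symm.joinedIn hcat (hp.closedBall _ _)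
    |>.trans (joinedIn_of_tendsto_atTop (lipschitzWith_truncate hp).continuous
      (fun r => hp.closedBall _ _) hp p.tendsto_truncate)

end PointedProperMetricSpace

lemma mk_mem_PGHCat0 {p : PointedProperMetricSpace} :
    (Quotient.mk _ p : PGHSpace) ∈ PGHCat0 ↔ IsCAT0Space p.carrier := by
  obtain ⟨e, -⟩ : Quotient.out (Quotient.mk pointedIsometrySetoid p) ≈ p := Quotient.mk_out p
  exact ⟨fun h => h.of_isometryEquiv e, fun h => h.of_isometryEquiv e.symm⟩

lemma isPathConnected_PGHCat0 : IsPathConnected PGHCat0 := by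
  have himage : Quotient.mk pointedIsometrySetoid ''
      {p : PointedProperMetricSpace | IsCAT0Space p.carrier} =
      PGHCat0 := by
    refine Set.Subset.antisymm (Set.image_subset_iff.2 fun p => mk_mem_PGHCat0.2) fun x => ?_
    exact Quotient.inductionOn x fun p hp => ⟨p, mk_mem_PGHCat0.1 hp, rfl⟩
  exact himage ▸ PointedProperMetricSpace.isPathConnected_isCAT0Space.image continuous_quotient_mk'

/-! ### The Lebesgue covering theorem -/

open Polynomial in
lemma integral_eval_eq_of_infinite {α : Type*} [MeasurableSpace α] {μ : MeasureTheory.Measure α}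
    {P : α → ℝ[X]} {N : ℕ} (hdeg : ∀ x, (P x).natDegree ≤ N)
    (hint : ∀ t, MeasureTheory.Integrable (fun x => (P x).eval t) μ) {S : Set ℝ}
    (hS : S.Infinite) {c : ℝ} (hc : ∀ t ∈ S, ∫ x, (P x).eval t ∂μ = c) (t : ℝ) :
    ∫ x, (P x).eval t ∂μ = c := by
  obtain ⟨s, hsS, hs⟩ := hS.exists_subset_card_eq (N + 1)
  have hne : s.Nonempty := Finset.card_pos.1 (hs ▸ N.succ_pos)
  have hinterp (x : α) : (P x).eval t = ∑ i ∈ s, (P x).eval i * (Lagrange.basis s id i).eval t := by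
    have hlt : (P x).degree < s.card :=
      degree_le_natDegree.trans_lt (by exact_mod_cast (Nat.lt_succ_of_le (hdeg x)).trans_eq hs.symm)
    conv_lhs => rw [Lagrange.eq_interpolate (Set.injOn_id _) hlt, Lagrange.interpolate_apply,
      eval_finsetSum]
    simp only [eval_mul, eval_C, id]
  calc ∫ x, (P x).eval t ∂μ = ∑ i ∈ s, (∫ x, (P x).eval i ∂μ) * (Lagrange.basis s id i).eval t := by
        simp_rw [hinterp, ← MeasureTheory.integral_mul_const]
        exact MeasureTheory.integral_finsetSum _ fun i _ => (hint i).mul_const _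
    _ = c * (∑ i ∈ s, Lagrange.basis s id i).eval t := by
        rw [eval_finsetSum, Finset.mul_sum]
        exact Finset.sum_congr rfl fun i hi => by rw [hc i (hsS hi)]
    _ = c := by rw [Lagrange.sum_basis (Set.injOn_id _) hne, eval_one, mul_one]

open Polynomial in
lemma exists_polynomial_eval_eq_det_one_add_smul {R ι : Type*} [CommRing R] [Fintype ι]
    (A : (ι → R) →ₗ[R] ι → R) :
    ∃ P : R[X], P.natDegree ≤ Fintype.card ι ∧ ∀ t, P.eval t = LinearMap.det (1 + t • A) := by
  classical
  refine ⟨_, natDegree_det_X_add_C_le (LinearMap.toMatrix' A) 1, fun t => ?_⟩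
  rw [← LinearMap.det_toMatrix', ← coe_evalRingHom, RingHom.map_det]
  congr 1
  ext i j
  rcases eq_or_ne i j with rfl | hij <;> simp [*, add_comm, mul_comm t]

section CubeDegree

open MeasureTheory

lemma injOn_id_add_of_lipschitzOnWith {E : Type*} [NormedAddCommGroup E] {v : E → E} {c : NNReal}
    {s : Set E} (hv : LipschitzOnWith c v s) (hc : c < 1) : Set.InjOn (id + v) s := by
  intro x hx y hy (hxy : x + v x = y + v y)
  have hsub : x - y = v y - v x := sub_eq_sub_iff_add_eq_add.2 (hxy.trans (add_comm _ _))
  refine dist_le_zero.1 ?_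
  have hdist : dist x y ≤ c * dist x y :=
    calc dist x y = dist (v x) (v y) := by rw [dist_eq_norm, hsub, dist_eq_norm']
      _ ≤ c * dist x y := hv.dist_le_mul x hx y hy
  nlinarith [NNReal.coe_lt_one.2 hc]

lemma continuous_det_one_add_smul {X E : Type*} [TopologicalSpace X] [NormedAddCommGroup E]
    [NormedSpace ℝ E] {v' : X → E →L[ℝ] E} (hv' : Continuous v') :
    Continuous fun z : ℝ × X => (1 + z.1 • v' z.2).det :=
  ContinuousLinearMap.continuous_det.comp
    (continuous_const.add (continuous_fst.smul (hv'.comp continuous_snd)))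

variable {ι : Type*} [Fintype ι] {v : (ι → ℝ) → ι → ℝ} {c : NNReal}

lemma abs_apply_le_of_eq_zero_on_face (hc : c ≤ 1) (hv : LipschitzOnWith c v (Set.Icc 0 1)) {i : ι}
    {t : ℝ} (ht : t ∈ Set.Icc 0 1) (hface : ∀ x ∈ Set.Icc 0 1, x i = t → v x i = 0) {x : ι → ℝ}
    (hx : x ∈ Set.Icc 0 1) : |v x i| ≤ |x i - t| := by
  classical
  have hmem : Function.update x i t ∈ Set.Icc 0 1 := by
    rw [← Set.pi_univ_Icc] at hx ⊢
    exact (Set.update_mem_pi_iff_of_mem hx).2 fun _ => ht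
  have hupdate : dist x (Function.update x i t) ≤ |x i - t| := by
    refine (dist_pi_le_iff (abs_nonneg _)).2 fun j => ?_
    rcases eq_or_ne j i with rfl | hji <;> simp [*, Real.dist_eq]
  calc |v x i| = dist (v x i) (v (Function.update x i t) i) := by
        rw [hface _ hmem (Function.update_self ..), Real.dist_eq, sub_zero]
    _ ≤ dist (v x) (v (Function.update x i t)) := dist_le_pi_dist _ _ i
    _ ≤ c * dist x (Function.update x i t) := hv.dist_le_mul _ hx _ hmem
    _ ≤ 1 * |x i - t| := by gcongr; exact_mod_cast hc
    _ = |x i - t| := one_mul _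

lemma mapsTo_cube_id_add (hc : c ≤ 1) (hv : LipschitzOnWith c v (Set.Icc 0 1))
    (h0 : ∀ x ∈ Set.Icc 0 1, ∀ i, x i = 0 → v x i = 0)
    (h1 : ∀ x ∈ Set.Icc 0 1, ∀ i, x i = 1 → v x i = 0) :
    Set.MapsTo (id + v) (Set.Icc 0 1) (Set.Icc 0 1) := by
  intro x hx
  have hx0 (i : ι) : 0 ≤ x i := hx.1 i
  have hx1 (i : ι) : x i ≤ 1 := hx.2 i
  refine ⟨fun i => ?_, fun i => ?_⟩
  · have hle := abs_apply_le_of_eq_zero_on_face hc hv ⟨le_rfl, zero_le_one⟩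
      (fun x hx => h0 x hx i) hx
    rw [sub_zero, abs_of_nonneg (hx0 i)] at hle
    simpa [neg_le_iff_add_nonneg'] using (abs_le.1 hle).1
  · have hle := abs_apply_le_of_eq_zero_on_face hc hv ⟨zero_le_one, le_rfl⟩
      (fun x hx => h1 x hx i) hx
    rw [abs_sub_comm, abs_of_nonneg (sub_nonneg.2 (hx1 i))] at hle
    simpa [le_sub_iff_add_le'] using (abs_le.1 hle).2

lemma surjOn_cube_id_add (hc : c < 1) (hv : LipschitzOnWith c v (Set.Icc 0 1))
    (h0 : ∀ x ∈ Set.Icc 0 1, ∀ i, x i = 0 → v x i = 0)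
    (h1 : ∀ x ∈ Set.Icc 0 1, ∀ i, x i = 1 → v x i = 0) :
    Set.SurjOn (id + v) (Set.Icc 0 1) (Set.Icc 0 1) := by
  intro y hy
  let toCube : (ι → unitInterval) → ι → ℝ := fun x i => x i
  have toCube_mem (x : ι → unitInterval) : toCube x ∈ Set.Icc 0 1 :=
    ⟨fun i => (x i).2.1, fun i => (x i).2.2⟩
  let T : (ι → unitInterval) → ι → unitInterval :=
    fun x i => Set.projIcc 0 1 zero_le_one (y i - v (toCube x) i)
  have hT : ContractingWith c T := by
    refine ⟨hc, LipschitzWith.of_dist_le_mul fun x x' => (dist_pi_le_iff (by positivity)).2 ?_⟩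
    intro i
    calc dist (T x i) (T x' i) ≤ dist (v (toCube x) i) (v (toCube x') i) := by
          rw [← dist_sub_left (y i), ← one_mul (dist (y i - _) _)]
          exact (LipschitzWith.projIcc zero_le_one).dist_le_mul _ _
      _ ≤ dist (v (toCube x)) (v (toCube x')) := dist_le_pi_dist _ _ i
      _ ≤ c * dist (toCube x) (toCube x') := hv.dist_le_mul _ (toCube_mem x) _ (toCube_mem x')
      _ = c * dist x x' := rfl
  obtain ⟨x, hx⟩ : ∃ x, T x = x := ⟨_, hT.fixedPoint_isFixedPt⟩
  refine ⟨toCube x, toCube_mem x, funext fun i => ?_⟩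
  have hxi : toCube x i = max 0 (min 1 (y i - v (toCube x) i)) := by
    rw [← Set.coe_projIcc 0 1 zero_le_one]
    exact congrArg Subtype.val (congrFun hx i).symm
  suffices toCube x i = y i - v (toCube x) i by simp [this]
  rcases lt_or_ge (y i - v (toCube x) i) 0 with hneg | hnonneg
  · rw [max_eq_left ((min_le_right _ _).trans hneg.le)] at hxi
    linarith [hy.1 i, h0 _ (toCube_mem x) i hxi, Pi.zero_apply (M := fun _ => ℝ) i]
  rcases lt_or_ge 1 (y i - v (toCube x) i) with hgt | hle
  · rw [min_eq_left hgt.le, max_eq_right zero_le_one] at hxi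
    linarith [hy.2 i, h1 _ (toCube_mem x) i hxi, Pi.one_apply (M := fun _ => ℝ) i]
  · rwa [min_eq_right hle, max_eq_right hnonneg] at hxi

lemma setIntegral_cube_det_one_add_eq_one {v' : (ι → ℝ) → (ι → ℝ) →L[ℝ] ι → ℝ} (hc : c < 1)
    (hv : LipschitzOnWith c v (Set.Icc 0 1))
    (hv' : ∀ x ∈ Set.Icc 0 1, HasFDerivWithinAt v (v' x) (Set.Icc 0 1) x)
    (h0 : ∀ x ∈ Set.Icc 0 1, ∀ i, x i = 0 → v x i = 0)
    (h1 : ∀ x ∈ Set.Icc 0 1, ∀ i, x i = 1 → v x i = 0)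
    (hdet : ∀ x ∈ Set.Icc 0 1, 0 ≤ (1 + v' x).det) :
    ∫ x in Set.Icc 0 1, (1 + v' x).det = 1 := by
  have himage : (id + v) '' Set.Icc 0 1 = Set.Icc 0 1 :=
    (surjOn_cube_id_add hc hv h0 h1).image_eq_of_mapsTo (mapsTo_cube_id_add hc.le hv h0 h1)
  calc ∫ x in Set.Icc 0 1, (1 + v' x).det
      = ∫ x in Set.Icc 0 1, |(1 + v' x).det| • (1 : ℝ) :=
        setIntegral_congr_fun measurableSet_Icc fun x hx => by
          simp only [abs_of_nonneg (hdet x hx), smul_eq_mul, mul_one]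
    _ = ∫ _ in (id + v) '' Set.Icc 0 1, (1 : ℝ) :=
        (integral_image_eq_integral_abs_det_fderiv_smul volume measurableSet_Icc
          (fun x hx => (hasFDerivWithinAt_id x _).add (hv' x hx))
          (injOn_id_add_of_lipschitzOnWith hv hc) fun _ => 1).symm
    _ = 1 := by
        rw [himage]
        simp [Measure.real, Real.volume_Icc_pi]

lemma eventually_setIntegral_cube_det_one_add_smul_fderiv_eq_one (hv : ContDiff ℝ 1 v)
    (h0 : ∀ x ∈ Set.Icc 0 1, ∀ i, x i = 0 → v x i = 0)
    (h1 : ∀ x ∈ Set.Icc 0 1, ∀ i, x i = 1 → v x i = 0) :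
    ∀ᶠ t : ℝ in nhds 0, ∫ x in Set.Icc 0 1, (1 + t • fderiv ℝ v x).det = 1 := by
  obtain ⟨L, hL⟩ := hv.contDiffOn.exists_lipschitzOnWith one_ne_zero (convex_Icc 0 1) isCompact_Icc
  have hdet : ∀ᶠ t : ℝ in nhds 0, ∀ x ∈ Set.Icc (0 : ι → ℝ) 1, 0 < (1 + t • fderiv ℝ v x).det :=
    isCompact_Icc.eventually_forall_of_forall_eventually fun x _ =>
      ((continuous_det_one_add_smul (hv.continuous_fderiv one_ne_zero)).tendsto (0, x)).eventually
        (lt_mem_nhds (by simp [ContinuousLinearMap.det]))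
  have hlip : ∀ᶠ t : ℝ in nhds 0, ‖t‖₊ * L < 1 :=
    ((continuous_nnnorm.mul continuous_const).tendsto' 0 0 (by simp)).eventually
      (gt_mem_nhds one_pos)
  filter_upwards [hdet, hlip] with t hdet hlip
  refine setIntegral_cube_det_one_add_eq_one hlip ((lipschitzWith_smul t).comp_lipschitzOnWith hL)
    (fun x _ => ((hv.differentiable one_ne_zero x).hasFDerivAt.const_smul t).hasFDerivWithinAt)
    (fun x hx i hi => ?_) (fun x hx i hi => ?_) fun x hx => (hdet x hx).le
  · simp [h0 x hx i hi]
  · simp [h1 x hx i hi]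

theorem setIntegral_cube_det_fderiv_eq_one {G : (ι → ℝ) → ι → ℝ} (hG : ContDiff ℝ 1 G)
    (h0 : ∀ x ∈ Set.Icc 0 1, ∀ i, x i = 0 → G x i = 0)
    (h1 : ∀ x ∈ Set.Icc 0 1, ∀ i, x i = 1 → G x i = 1) :
    ∫ x in Set.Icc 0 1, (fderiv ℝ G x).det = 1 := by
  let v : (ι → ℝ) → ι → ℝ := fun x => G x - x
  have hv : ContDiff ℝ 1 v := hG.sub contDiff_id
  have hfderiv (x : ι → ℝ) : 1 + fderiv ℝ v x = fderiv ℝ G x := by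
    have hv' : HasFDerivAt v (fderiv ℝ G x - 1) x :=
      (hG.differentiable one_ne_zero x).hasFDerivAt.sub (hasFDerivAt_id x)
    rw [hv'.fderiv, add_sub_cancel]
  have hsmall := eventually_setIntegral_cube_det_one_add_smul_fderiv_eq_one hv
    (fun x hx i hi => by simp [v, h0 x hx i hi, hi]) fun x hx i hi => by simp [v, h1 x hx i hi, hi]
  choose P hdeg hP using fun x =>
    exists_polynomial_eval_eq_det_one_add_smul (fderiv ℝ v x : (ι → ℝ) →ₗ[ℝ] ι → ℝ)
  have heval (t : ℝ) (x : ι → ℝ) : (P x).eval t = (1 + t • fderiv ℝ v x).det := hP x t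
  have hint (t : ℝ) : IntegrableOn (fun x => (P x).eval t) (Set.Icc 0 1) := by
    simp only [heval]
    exact ((continuous_det_one_add_smul (hv.continuous_fderiv one_ne_zero)).comp
      (Continuous.prodMk_right t)).integrableOn_Icc
  have hone := integral_eval_eq_of_infinite hdeg hint (infinite_of_mem_nhds 0 hsmall)
    (fun t ht => by simp only [heval]; exact ht) 1
  simpa only [heval, one_smul, hfderiv] using hone

end CubeDegree

section PartitionOfUnity

open scoped Manifold ContDiff

lemma sum_smul_mem_vectorSpan {ι E : Type*} [AddCommGroup E] [Module ℝ E] {s : Finset ι}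
    {c : ι → ℝ} (y : ι → E) (hc : ∑ w ∈ s, c w = 0) :
    ∑ w ∈ s, c w • y w ∈ vectorSpan ℝ (y '' s) := by
  rcases s.eq_empty_or_nonempty with rfl | ⟨o, ho⟩
  · simp
  · have hsub : ∑ w ∈ s, c w • y w = ∑ w ∈ s, c w • (y w - y o) := by
      simp_rw [smul_sub, Finset.sum_sub_distrib, ← Finset.sum_smul, hc, zero_smul, sub_zero]
    rw [hsub]
    exact Submodule.sum_mem _ fun w hw => Submodule.smul_mem _ _ <|
      vsub_mem_vectorSpan ℝ (Set.mem_image_of_mem y hw) (Set.mem_image_of_mem y ho)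

lemma det_eq_zero_of_forall_mem {E : Type*} [NormedAddCommGroup E] [NormedSpace ℝ E]
    [FiniteDimensional ℝ E] {B : E →L[ℝ] E} {W : Submodule ℝ E} (hB : ∀ v, B v ∈ W)
    (hW : Module.finrank ℝ W < Module.finrank ℝ E) : B.det = 0 := by
  refine LinearMap.det_eq_zero_iff_ker_ne_bot.2 fun hker => hW.not_ge ?_
  rw [← LinearMap.finrank_range_of_inj (LinearMap.ker_eq_bot.1 hker)]
  exact Submodule.finrank_mono (LinearMap.range_le_iff_comap.2 (Submodule.eq_top_iff'.2 hB))

/-- Near an interior point of `s` the weights sum to one, so their differentials sum to zero. -/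
lemma fderiv_finsum_smul_mem_vectorSpan {V E : Type*} [NormedAddCommGroup E] [NormedSpace ℝ E]
    {s : Set E} (ρ : SmoothPartitionOfUnity V 𝓘(ℝ, E) E s) (y : V → E) {x : E}
    (hx : x ∈ interior s) (v : E) :
    fderiv ℝ (fun z => ∑ᶠ w, ρ w z • y w) x v ∈ vectorSpan ℝ (y '' ρ.finsupport x) := by
  have hsub := ρ.finsupport_subset_fintsupport x
  have hdiff (w : V) : HasFDerivAt (ρ w) (fderiv ℝ (ρ w) x) x :=
    ((ρ w).contMDiff.contDiff.differentiable (by simp) x).hasFDerivAt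
  have hzero (w : V) (hw : w ∉ ρ.finsupport x) : fderiv ℝ (ρ w) x = 0 := by
    rw [ρ.mem_finsupport, Function.notMem_support] at hw
    exact IsLocalMin.fderiv_eq_zero (.of_forall fun z => hw ▸ ρ.nonneg w z)
  have hsum : ∑ w ∈ ρ.fintsupport x, fderiv ℝ (ρ w) x = 0 := by
    refine (HasFDerivAt.fun_sum fun w _ => hdiff w).unique <|
      (hasFDerivAt_const (1 : ℝ) x).congr_of_eventuallyEq ?_
    filter_upwards [ρ.eventually_finsupport_subset x, mem_interior_iff_mem_nhds.1 hx] with z hz hzs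
    exact ρ.sum_finsupport' z hzs hz
  have hfderiv : HasFDerivAt (fun z => ∑ᶠ w, ρ w z • y w)
      (∑ w ∈ ρ.fintsupport x, (fderiv ℝ (ρ w) x).smulRight (y w)) x := by
    refine (HasFDerivAt.fun_sum fun w _ => (hdiff w).smul_const (y w)).congr_of_eventuallyEq ?_
    filter_upwards [ρ.eventually_finsupport_subset x] with z hz
    refine finsum_eq_sum_of_support_subset _ ((Function.support_smul_subset_left _ _).trans ?_)
    rw [← ρ.coe_finsupport]
    exact_mod_cast hz
  rw [hfderiv.fderiv, ← Finset.sum_subset hsub fun w _ hw => by ext; simp [hzero w hw]]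
  rw [← Finset.sum_subset hsub fun w _ hw => hzero w hw] at hsum
  have hsum_apply : ∑ w ∈ ρ.finsupport x, fderiv ℝ (ρ w) x v = 0 := by
    rw [← _root_.sum_apply, hsum, _root_.zero_apply]
  rw [_root_.sum_apply]
  exact sum_smul_mem_vectorSpan y hsum_apply

end PartitionOfUnity

section CubeCover

open MeasureTheory
open scoped Manifold ContDiff

variable {ι V : Type*} [Fintype ι]

lemma setIntegral_cube_det_fderiv_finsum_smul_eq_zero
    (ρ : SmoothPartitionOfUnity V 𝓘(ℝ, ι → ℝ) (ι → ℝ) (Set.Icc 0 1)) (y : V → ι → ℝ)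
    (hρ : ∀ x ∈ Set.Icc 0 1, (ρ.finsupport x).card ≤ Fintype.card ι) :
    ∫ x in Set.Icc 0 1, (fderiv ℝ (fun z => ∑ᶠ w, ρ w z • y w) x).det = 0 := by
  classical
  have hinterior : interior (Set.Icc (0 : ι → ℝ) 1) =ᵐ[volume] Set.Icc 0 1 :=
    interior_ae_eq_of_null_frontier ((convex_Icc 0 1).addHaar_frontier volume)
  rw [← setIntegral_congr_set hinterior]
  refine setIntegral_eq_zero_of_forall_eq_zero fun x hx => ?_
  refine det_eq_zero_of_forall_mem (fderiv_finsum_smul_mem_vectorSpan ρ y hx) ?_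
  have hxs : x ∈ Set.Icc 0 1 := interior_subset hx
  have hpos : 0 < (ρ.finsupport x).card := by
    rw [Finset.card_pos, Finset.nonempty_iff_ne_empty]
    intro hempty
    have hsum := ρ.sum_finsupport x hxs
    rw [hempty, Finset.sum_empty] at hsum
    exact zero_ne_one hsum
  obtain ⟨n, hn⟩ := Nat.exists_eq_add_one.2 hpos
  rw [Module.finrank_fintype_fun_eq_card, ← Finset.coe_image]
  exact (finrank_vectorSpan_image_finset_le ℝ y _ hn).trans_lt (by have := hρ x hxs; lia)

/-- With too few overlaps, the map of the cube built from a partition of unity would have degree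
one but a differential of non-maximal rank. -/
theorem exists_mem_cube_card_lt_encard {U : V → Set (ι → ℝ)} (hU : ∀ w, IsOpen (U w))
    (hcov : Set.Icc 0 1 ⊆ ⋃ w, U w) (y : V → ι → ℝ)
    (h0 : ∀ w, ∀ x ∈ U w ∩ Set.Icc 0 1, ∀ i, x i = 0 → y w i = 0)
    (h1 : ∀ w, ∀ x ∈ U w ∩ Set.Icc 0 1, ∀ i, x i = 1 → y w i = 1) :
    ∃ x ∈ Set.Icc 0 1, (Fintype.card ι : ℕ∞) < {w | x ∈ U w}.encard := by
  by_contra! hcard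
  obtain ⟨ρ, hρ⟩ :=
    SmoothPartitionOfUnity.exists_isSubordinate 𝓘(ℝ, ι → ℝ) isClosed_Icc U hU hcov
  have hmem {w : V} {x : ι → ℝ} (hw : ρ w x ≠ 0) : x ∈ U w := hρ w (subset_tsupport _ hw)
  have hfinsupport (x : ι → ℝ) (hx : x ∈ Set.Icc 0 1) :
      (ρ.finsupport x).card ≤ Fintype.card ι := by
    have hsub : (ρ.finsupport x : Set V) ⊆ {w | x ∈ U w} := fun w hw => by
      rw [ρ.coe_finsupport] at hw
      exact hmem hw
    have := (Set.encard_le_encard hsub).trans (hcard x hx)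
    rw [Set.encard_coe_eq_coe_finsetCard] at this
    exact_mod_cast this
  have hsmooth : ContDiff ℝ 1 fun x => ∑ᶠ w, ρ w x • y w :=
    (ρ.contMDiff_finsum_smul (n := ⊤) fun w x _ => contMDiffAt_const).contDiff.of_le (by simp)
  have hface {t : ℝ} {i : ι} {x : ι → ℝ} (hx : x ∈ Set.Icc 0 1)
      (hy : ∀ w, x ∈ U w ∩ Set.Icc 0 1 → y w i = t) : (∑ᶠ w, ρ w x • y w) i = t :=
    ρ.finsum_smul_mem_convex (g := fun w _ => y w) (t := {z : ι → ℝ | z i = t}) hx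
      (fun w hw => hy w ⟨hmem hw, hx⟩)
      (convex_hyperplane (f := fun z : ι → ℝ => z i) (LinearMap.proj i).isLinear t)
  have hone := setIntegral_cube_det_fderiv_eq_one hsmooth
    (fun x hx i hi => hface hx fun w hw => h0 w x hw i hi)
    (fun x hx i hi => hface hx fun w hw => h1 w x hw i hi)
  rw [setIntegral_cube_det_fderiv_finsum_smul_eq_zero ρ y hfinsupport] at hone
  exact zero_ne_one hone

end CubeCover

section CovDim

variable {X ι : Type*} [TopologicalSpace X] {A B : ι → Set X}

lemma exists_isOpen_cover_of_disjoint [Finite ι] (hA : ∀ i, IsClosed (A i))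
    (hB : ∀ i, IsClosed (B i)) (hAB : ∀ i, Disjoint (A i) (B i)) :
    ∃ O : Set ι → Set X, (∀ s, IsOpen (O s)) ∧ ⋃ s, O s = Set.univ ∧
      (∀ s, ∀ i ∈ s, Disjoint (O s) (A i)) ∧ ∀ s, ∀ i ∉ s, Disjoint (O s) (B i) := by
  refine ⟨fun s => (⋂ i ∈ s, (A i)ᶜ) ∩ ⋂ i ∈ sᶜ, (B i)ᶜ, fun s => ?_, ?_, fun s i hi => ?_,
    fun s i hi => ?_⟩
  · exact (s.toFinite.isOpen_biInter fun i _ => (hA i).isOpen_compl).inter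
      (sᶜ.toFinite.isOpen_biInter fun i _ => (hB i).isOpen_compl)
  · refine Set.eq_univ_of_forall fun x => Set.mem_iUnion.2 ⟨{i | x ∉ A i}, ?_, ?_⟩
    · exact Set.mem_iInter₂.2 fun i hi => hi
    · exact Set.mem_iInter₂.2 fun i hi => (hAB i).notMem_of_mem_left (not_not.1 hi)
  · exact Set.subset_compl_iff_disjoint_right.1
      (Set.inter_subset_left.trans (Set.biInter_subset_of_mem hi))
  · exact Set.subset_compl_iff_disjoint_right.1
      (Set.inter_subset_right.trans (Set.biInter_subset_of_mem hi))

theorem not_covDimLE_of_continuous_cube [Fintype ι] {n : ℕ} (hn : n < Fintype.card ι)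
    {f : (ι → unitInterval) → X} (hf : Continuous f) (hA : ∀ i, IsClosed (A i))
    (hB : ∀ i, IsClosed (B i)) (hAB : ∀ i, Disjoint (A i) (B i))
    (hfA : ∀ x i, x i = 0 → f x ∈ A i) (hfB : ∀ x i, x i = 1 → f x ∈ B i) : ¬CovDimLE X n := by
  classical
  intro hdim
  obtain ⟨O, hO, hcover, hOA, hOB⟩ := exists_isOpen_cover_of_disjoint hA hB hAB
  obtain ⟨V, hV, hVcover, hVO, hVcard⟩ := hdim (Set.range O) (Set.forall_mem_range.2 hO) hcover
  have hrefine (w : V) : ∃ s, w.1 ⊆ O s := by simpa using hVO w w.2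
  choose s hs using hrefine
  let g : (ι → ℝ) → X := fun x => f fun i => Set.projIcc 0 1 zero_le_one (x i)
  have hg : Continuous g :=
    hf.comp (continuous_pi fun i => continuous_projIcc.comp (continuous_apply i))
  have hgcover : Set.Icc 0 1 ⊆ ⋃ w : V, g ⁻¹' w := fun x _ => by
    rw [← Set.preimage_iUnion, ← Set.sUnion_eq_iUnion, hVcover]
    trivial
  obtain ⟨x, -, hx⟩ := exists_mem_cube_card_lt_encard (fun w : V => (hV w w.2).preimage hg) hgcover
    (fun w i => if i ∈ s w then 1 else 0)
    (fun w x hx i hi => if_neg fun his =>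
      (hOA _ i his).notMem_of_mem_left (hs w hx.1) (hfA _ i (by simp [hi])))
    (fun w x hx i hi => if_pos <| by_contra fun his =>
      (hOB _ i his).notMem_of_mem_left (hs w hx.1) (hfB _ i (by simp [hi])))
  refine hx.not_ge ?_
  calc {w : V | x ∈ g ⁻¹' w}.encard = (Subtype.val '' {w : V | g x ∈ w.1}).encard :=
        (Subtype.val_injective.encard_image _).symm
    _ ≤ {w ∈ V | g x ∈ w}.encard := Set.encard_le_encard (Set.image_subset_iff.2 fun w hw =>
        ⟨w.2, hw⟩)
    _ ≤ n + 1 := hVcard _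
    _ ≤ Fintype.card ι := by exact_mod_cast hn

end CovDim

/-! ### Spaces with hairs -/

/-- The `ℓ¹` product of `Y` with `ℝ^ι`, in which `hairedSet` grows a hair in each direction of
`ι`. -/
abbrev HairAmbient (Y ι : Type*) : Type _ := WithLp 1 (Y × PiLp 1 fun _ : ι => ℝ)

namespace HairAmbient

section Definitions

variable {Y ι : Type*}

/-- The embedding of `Y` as the zero section of the `ℓ¹` product. -/
def base (y : Y) : HairAmbient Y ι := WithLp.toLp 1 (y, 0)

variable [DecidableEq ι] {h : ι → NNReal}

/-- The point at signed distance `s` from `base q` in the direction `i`. -/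
def hair (q : Y) (i : ι) (s : ℝ) : HairAmbient Y ι := WithLp.toLp 1 (q, PiLp.single 1 i s)

/-- The union of `Y` and, for every `i : ι`, a segment of length `h i` glued to `Y` at `q`. -/
noncomputable def hairedSet (q : Y) (h : ι → NNReal) : Set (HairAmbient Y ι) :=
  Set.range base ∪ ⋃ i, hair q i '' Set.Icc 0 (h i : ℝ)

lemma hair_zero (q : Y) (i : ι) : hair q i 0 = base q := by
  simp [base, hair]

lemma base_mem_hairedSet (y q : Y) (h : ι → NNReal) : base y ∈ hairedSet q h :=
  Or.inl ⟨y, rfl⟩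

lemma hair_mem_hairedSet (q : Y) {i : ι} {s : ℝ} (hs : s ∈ Set.Icc 0 (h i : ℝ)) :
    hair q i s ∈ hairedSet q h :=
  Or.inr (Set.mem_iUnion.2 ⟨i, s, hs, rfl⟩)

end Definitions

section Distances

variable {Y ι : Type*} [MetricSpace Y] [Fintype ι]

lemma dist_toLp (y y' : Y) (v v' : PiLp 1 fun _ : ι => ℝ) :
    dist (WithLp.toLp 1 (y, v) : HairAmbient Y ι) (WithLp.toLp 1 (y', v')) =
      dist y y' + dist v v' := by
  rw [WithLp.prod_dist_eq_add (by norm_num)]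
  simp

lemma dist_base_base (y y' : Y) : dist (base y : HairAmbient Y ι) (base y') = dist y y' := by
  rw [base, base, dist_toLp, dist_self, add_zero]

lemma isometry_base : Isometry (base : Y → HairAmbient Y ι) := Isometry.of_dist_eq dist_base_base

variable [DecidableEq ι]

lemma dist_base_hair (y q : Y) (i : ι) (s : ℝ) : dist (base y) (hair q i s) = dist y q + |s| := by
  simp [base, hair, dist_toLp]

lemma dist_hair_hair_same (q : Y) (i : ι) (s s' : ℝ) :
    dist (hair q i s) (hair q i s') = |s - s'| := by
  simp [hair, dist_toLp, Real.dist_eq]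

lemma dist_hair_hair_of_ne (q : Y) {i j : ι} (hij : i ≠ j) (s s' : ℝ) :
    dist (hair q i s) (hair q j s') = |s| + |s'| := by
  rw [hair, hair, dist_toLp, dist_self, zero_add, PiLp.dist_eq_of_L1,
    ← Finset.sum_subset (Finset.subset_univ {i, j}), Finset.sum_pair hij]
  · simp [hij, hij.symm]
  · intro k _ hk
    simp only [Finset.mem_insert, Finset.mem_singleton, not_or] at hk
    simp [hk.1, hk.2]

lemma isometry_hair (q : Y) (i : ι) : Isometry (hair q i) := Isometry.of_dist_eq fun s s' => by
  rw [dist_hair_hair_same, Real.dist_eq]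

end Distances

section HairedSet

variable {Y ι : Type*} [MetricSpace Y] [DecidableEq ι] {a q : Y} {h : ι → NNReal}

lemma isCompact_hairedSet [CompactSpace Y] [Finite ι] (q : Y) (h : ι → NNReal) :
    IsCompact (hairedSet q h) := by
  cases nonempty_fintype ι
  exact (isCompact_range isometry_base.continuous).union
    (isCompact_iUnion fun i => isCompact_Icc.image (isometry_hair q i).continuous)

variable [Fintype ι]

lemma isCAT0Space_hairedSet (hY : IsCAT0Space Y) (q : Y) (h : ι → NNReal) :
    IsCAT0Space (hairedSet q h) := by
  rw [hairedSet, ← Set.biUnion_univ, ← Finset.coe_univ]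
  generalize (Finset.univ : Finset ι) = s
  induction s using Finset.induction_on with
  | empty =>
    rw [Finset.coe_empty, Set.biUnion_empty, Set.union_empty]
    exact hY.of_isometryEquiv isometry_base.isometryEquivOnRange
  | insert i s his ih =>
    rw [Finset.coe_insert, Set.biUnion_insert, Set.union_left_comm, Set.union_comm]
    refine ih.union (isCAT0Space_image_Icc fun s _ s' _ => dist_hair_hair_same q i s s')
      (o := base q) (Or.inl ⟨q, rfl⟩) ⟨0, ⟨le_rfl, (h i).2⟩, hair_zero q i⟩ ?_
    rintro x hx _ ⟨s', -, rfl⟩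
    rcases hx with ⟨y, rfl⟩ | hx
    · rw [dist_base_hair, dist_base_hair, dist_base_base, dist_self, zero_add]
    · obtain ⟨j, hj, t, -, rfl⟩ := Set.mem_iUnion₂.1 hx
      have hji : j ≠ i := ne_of_mem_of_not_mem hj his
      rw [dist_hair_hair_of_ne q hji, dist_comm, dist_base_hair, dist_base_hair, dist_self,
        zero_add, zero_add]

lemma exists_mem_hairedSet_dist_le (h' : ι → NNReal) {x : HairAmbient Y ι}
    (hx : x ∈ hairedSet q h) : ∃ y ∈ hairedSet q h', dist x y ≤ dist h h' := by
  rcases hx with hx | hx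
  · exact ⟨x, Or.inl hx, (dist_self x).trans_le dist_nonneg⟩
  · obtain ⟨i, s, ⟨hs0, hs⟩, rfl⟩ := Set.mem_iUnion.1 hx
    refine ⟨hair q i (min s (h' i)), hair_mem_hairedSet q
      ⟨le_min hs0 (h' i).2, min_le_right _ _⟩, ?_⟩
    calc dist (hair q i s) (hair q i (min s (h' i))) = |s - min s (h' i)| :=
          dist_hair_hair_same q i _ _
      _ = max 0 (s - h' i) := by
          rw [← max_sub_sub_left, sub_self, abs_of_nonneg (le_max_left _ _)]
      _ ≤ |(h i : ℝ) - h' i| :=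
          max_le (abs_nonneg _) ((sub_le_sub_right hs _).trans (le_abs_self _))
      _ = dist (h i) (h' i) := (NNReal.dist_eq _ _).symm
      _ ≤ dist h h' := dist_le_pi_dist h h' i

/-- Points of `hairedSet q h` far from `base a` lie far out on a hair, and two of them on the same
hair are close to each other. -/
lemma card_le_card_of_far_of_separated (hq : ∀ y, dist a y ≤ dist a q) {ℓ : NNReal}
    (hh : ∀ k, h k ≤ 2 * ℓ) {κ : Type*} {J : Finset κ} {w : κ → HairAmbient Y ι}
    (hw : ∀ j ∈ J, w j ∈ hairedSet q h) (hfar : ∀ j ∈ J, dist a q + ℓ < dist (base a) (w j))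
    (hsep : (J : Set κ).Pairwise fun j j' => ℓ < dist (w j) (w j')) :
    J.card ≤ (Finset.univ.filter fun k => ℓ < h k).card := by
  have hloc : ∀ j ∈ J, ∃ k, ∃ s : ℝ, ℓ < s ∧ s ≤ h k ∧ hair q k s = w j := by
    intro j hj
    have hfarj := hfar j hj
    rcases hw j hj with ⟨y, hy⟩ | hmem
    · rw [← hy, dist_base_base] at hfarj
      linarith [hq y, ℓ.2]
    · obtain ⟨k, s, hs, hks⟩ := Set.mem_iUnion.1 hmem
      rw [← hks, dist_base_hair, abs_of_nonneg hs.1] at hfarj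
      exact ⟨k, s, by linarith, hs.2, hks⟩
  rcases J.eq_empty_or_nonempty with rfl | ⟨j₀, hj₀⟩
  · simp
  have : Nonempty ι := ⟨(hloc j₀ hj₀).choose⟩
  choose! k s hℓs hsh hks using hloc
  refine Finset.card_le_card_of_injOn k (fun j hj => ?_) fun j hj j' hj' hkk => ?_
  · simpa using (hℓs j hj).trans_le (hsh j hj)
  · by_contra hne
    have hlt : ℓ < dist (w j) (w j') := hsep hj hj' hne
    have hle : ∀ i ∈ J, s i ≤ 2 * ℓ := fun i hi => (hsh i hi).trans (by exact_mod_cast hh (k i))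
    rw [← hks j hj, ← hks j' hj', hkk, dist_hair_hair_same] at hlt
    exact hlt.not_ge <| abs_le.2
      ⟨by linarith [hℓs j hj, hle j' hj'], by linarith [hℓs j' hj', hle j hj]⟩

end HairedSet

end HairAmbient

namespace PointedProperMetricSpace

open HairAmbient

section HairedSpace

variable {Y ι : Type} [MetricSpace Y] [CompactSpace Y] [Fintype ι] [DecidableEq ι] {a q : Y}
  {h h' : ι → NNReal}

/-- The space `hairedSet q h`, pointed at the point `a` of `Y`. -/
noncomputable def haired (a q : Y) (h : ι → NNReal) : PointedProperMetricSpace :=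
  ofIsCompact (isCompact_hairedSet q h) (base_mem_hairedSet a q h)

lemma lipschitzWith_haired (a q : Y) :
    LipschitzWith 1 (haired a q : (ι → NNReal) → PointedProperMetricSpace) := by
  refine LipschitzWith.mk_one fun h h' => dist_ofIsCompact_le _ _ _ _ dist_nonneg
    (fun x hx => exists_mem_hairedSet_dist_le h' hx) fun y hy => ?_
  obtain ⟨x, hx, hyx⟩ := exists_mem_hairedSet_dist_le h hy
  exact ⟨x, hx, by rwa [dist_comm, dist_comm h]⟩

lemma dist_haired_le (a q : Y) {t : ℝ} (ht : 0 < t) (hh : ∀ i, h i < t) :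
    dist ⟨Y, a⟩ (haired a q h) ≤ t := by
  refine pghDist_le_of_isometry (W := HairAmbient Y ι) (i := base) (j := Subtype.val)
    isometry_base isometry_subtype_coe rfl ht
    (fun y _ => ⟨⟨base y, base_mem_hairedSet y q h⟩, by rwa [dist_self]⟩) ?_
  rintro ⟨x, ⟨y, rfl⟩ | hx⟩ -
  · exact ⟨y, by rwa [dist_self]⟩
  · obtain ⟨i, s, ⟨hs0, hs⟩, rfl⟩ := Set.mem_iUnion.1 hx
    refine ⟨q, ?_⟩
    rw [dist_base_hair, dist_self, zero_add, abs_of_nonneg hs0]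
    exact hs.trans_lt (hh i)

/-- An approximate isometry between haired spaces sends the tips of long hairs to points on distinct
hairs that are almost as long. -/
lemma le_dist_haired_of_card_lt (hq : ∀ y, dist a y ≤ dist a q) {ℓ : NNReal} {δ : ℝ}
    (hδ : δ ≤ 1 / 2) (hreach : ∀ j, δ * (dist a q + h' j) ≤ 1) (hh : ∀ k, h k ≤ 2 * ℓ)
    (hcard : (Finset.univ.filter fun k => ℓ < h k).card <
      (Finset.univ.filter fun j => ℓ + 2 * δ ≤ h' j).card) :
    δ ≤ dist (haired a q h) (haired a q h') := by
  by_contra! hlt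
  have hδ0 : 0 < δ := dist_nonneg.trans_lt hlt
  rw [dist_comm] at hlt
  obtain ⟨w, hbase, hdist⟩ := exists_approx_isometry hδ hlt
  let tip (j : ι) : hairedSet q h' := ⟨hair q j (h' j), hair_mem_hairedSet q ⟨(h' j).2, le_rfl⟩⟩
  have dist_tip (j : ι) : dist (haired a q h').pt (tip j) = dist a q + h' j :=
    (dist_base_hair a q j _).trans (by rw [NNReal.abs_eq])
  have tip_near (j : ι) : dist (haired a q h').pt (tip j) ≤ δ⁻¹ := by
    rw [dist_tip, ← one_div, le_div_iff₀' hδ0]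
    exact hreach j
  refine hcard.not_ge (card_le_card_of_far_of_separated hq hh
    (w := fun j => Subtype.val (p := (· ∈ hairedSet q h)) (w (tip j))) (fun j _ => (w (tip j)).2)
    (fun j hj => ?_) fun j hj j' hj' hne => ?_)
  · have hclose := (abs_lt.1 (hbase (tip j) (tip_near j))).1
    rw [dist_tip] at hclose
    change _ < dist (haired a q h).pt (w (tip j))
    linarith [(Finset.mem_filter.1 hj).2]
  · have hclose := (abs_lt.1 (hdist (tip j) (tip j') (tip_near j) (tip_near j'))).1
    have dist_tip_tip : dist (tip j) (tip j') = h' j + h' j' :=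
      (dist_hair_hair_of_ne q hne _ _).trans
        (by rw [NNReal.abs_eq, NNReal.abs_eq])
    change _ < dist (w (tip j)) (w (tip j'))
    change _ < dist (w (tip j)) (w (tip j')) - dist (tip j) (tip j') at hclose
    linarith [(Finset.mem_filter.1 hj).2, (Finset.mem_filter.1 hj').2, ℓ.2]

end HairedSpace

section HairLength

variable {N : ℕ} {η : NNReal} {x y : Fin N → unitInterval} {i j : Fin N}

/-- The hair lengths attached to a point of the cube. The hairs are pairwise distinguishable, as
`hairLength η x j` lies in `[η (3 N + 2 j), η (3 N + 2 j + 1)]`, and all lengths are within a factor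
two of each other. -/
noncomputable def hairLength (η : NNReal) (x : Fin N → unitInterval) (j : Fin N) : NNReal :=
  η * (3 * N + 2 * j.val + unitInterval.toNNReal (x j))

lemma continuous_hairLength (η : NNReal) :
    Continuous (hairLength η : (Fin N → unitInterval) → Fin N → NNReal) := by
  unfold hairLength
  fun_prop

lemma hairLength_le (η : NNReal) (x : Fin N → unitInterval) (j : Fin N) :
    hairLength η x j ≤ 5 * N * η := by
  have hxj : unitInterval.toNNReal (x j) ≤ 1 := (x j).2.2
  have hj : ((j.val + 1 : ℕ) : NNReal) ≤ N := by exact_mod_cast j.2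
  push_cast at hj
  calc hairLength η x j ≤ η * (3 * N + 2 * (j.val + 1)) := by
        unfold hairLength
        gcongr η * ?_
        linarith
    _ ≤ η * (3 * N + 2 * N) := by gcongr
    _ = 5 * N * η := by ring

lemma lt_of_lt_hairLength (hxi : x i = 0) (hlt : η * (3 * N + 2 * i.val) < hairLength η x j) :
    i < j := by
  by_contra! hji
  refine hlt.not_ge ?_
  unfold hairLength
  gcongr η * ?_
  rcases hji.eq_or_lt with rfl | hji
  · simp [hxi]
  · have hxj : unitInterval.toNNReal (x j) ≤ 1 := (x j).2.2
    have hji' : ((j.val + 1 : ℕ) : NNReal) ≤ i.val := by exact_mod_cast hji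
    push_cast at hji'
    linarith

lemma add_le_hairLength (hyi : y i = 1) (hij : i ≤ j) :
    η * (3 * N + 2 * i.val) + η ≤ hairLength η y j := by
  unfold hairLength
  rw [← mul_add_one]
  gcongr η * ?_
  rcases hij.eq_or_lt with rfl | hij
  · simp [hyi]
  · have hij' : ((i.val + 1 : ℕ) : NNReal) ≤ j.val := by exact_mod_cast hij
    push_cast at hij'
    linarith [(unitInterval.toNNReal (y j)).2]

lemma le_dist_haired_hairLength {Y : Type} [MetricSpace Y] [CompactSpace Y] {a q : Y}
    (hq : ∀ y, dist a y ≤ dist a q) {δ : ℝ} (hδ0 : 0 ≤ δ) (hδ : δ ≤ 1 / 2) (hδη : 2 * δ ≤ η)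
    (hreach : δ * (dist a q + 5 * N * η) ≤ 1) (hxi : x i = 0) (hyi : y i = 1) :
    δ ≤ dist (haired a q (hairLength η x)) (haired a q (hairLength η y)) := by
  refine le_dist_haired_of_card_lt hq hδ (fun j => le_trans ?_ hreach)
    (ℓ := η * (3 * N + 2 * i.val)) (fun k => (hairLength_le η x k).trans ?_) ?_
  · gcongr
    exact_mod_cast hairLength_le η y j
  · have : 0 ≤ η * (N + 4 * i.val) := zero_le
    linarith
  · have hshort : (Finset.univ.filter fun k => η * (3 * N + 2 * i.val) < hairLength η x k) ⊆
        Finset.Ioi i := fun k hk =>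
      Finset.mem_Ioi.2 (lt_of_lt_hairLength hxi (Finset.mem_filter.1 hk).2)
    have hlong : Finset.Ici i ⊆ Finset.univ.filter fun j =>
        (η * (3 * N + 2 * i.val) : NNReal) + 2 * δ ≤ hairLength η y j := fun j hj => by
      have hle := NNReal.coe_le_coe.2 (add_le_hairLength (η := η) hyi (Finset.mem_Ici.1 hj))
      rw [NNReal.coe_add] at hle
      exact Finset.mem_filter.2 ⟨Finset.mem_univ _, by linarith⟩
    calc _ ≤ (Finset.Ioi i).card := Finset.card_le_card hshort
      _ = ((Finset.Ici i).erase i).card := by rw [Finset.Ici_erase]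
      _ < (Finset.Ici i).card := Finset.card_erase_lt_of_mem (Finset.mem_Ici.2 le_rfl)
      _ ≤ _ := Finset.card_le_card hlong

end HairLength

end PointedProperMetricSpace

namespace PointedProperMetricSpace

lemma exists_separated_cube {Y : Type} [MetricSpace Y] [CompactSpace Y] (hY : IsCAT0Space Y)
    (a : Y) (N : ℕ) {ε : ℝ} (hε : 0 < ε) :
    ∃ F : (Fin N → unitInterval) → PointedProperMetricSpace, Continuous F ∧
      (∀ x, IsCAT0Space (F x).carrier) ∧ (∀ x, dist ⟨Y, a⟩ (F x) < ε) ∧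
      ∃ δ > 0, ∀ x y i, x i = 0 → y i = 1 → δ ≤ dist (F x) (F y) := by
  obtain ⟨q, -, hq⟩ := isCompact_univ.exists_isMaxOn (Set.nonempty_of_mem (Set.mem_univ a))
    (continuous_const.dist continuous_id : Continuous (dist a)).continuousOn
  obtain ⟨η, hη, hηε⟩ := exists_pos_mul_lt (half_pos hε) (5 * N : ℝ)
  lift η to NNReal using hη.le
  obtain ⟨δ, hδ, hδreach⟩ := exists_pos_mul_lt one_pos (dist a q + 5 * N * η)
  have hlength (x : Fin N → unitInterval) (i : Fin N) : (hairLength η x i : ℝ) < ε / 2 :=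
    (NNReal.coe_le_coe.2 (hairLength_le η x i)).trans_lt (by exact_mod_cast hηε)
  refine ⟨fun x => haired a q (hairLength η x),
    (lipschitzWith_haired a q).continuous.comp (continuous_hairLength η),
    fun x => HairAmbient.isCAT0Space_hairedSet hY q _,
    fun x => (dist_haired_le a q (half_pos hε) (hlength x)).trans_lt (half_lt_self hε),
    min δ (min (1 / 2) (η / 2)), by positivity, fun x y i hxi hyi => ?_⟩
  refine le_dist_haired_hairLength (fun y => hq (Set.mem_univ y)) (by positivity)
    ((min_le_right _ _).trans (min_le_left _ _)) ?_ ?_ hxi hyi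
  · linarith [(min_le_right δ (min (1 / 2) (η / 2 : ℝ))).trans (min_le_right _ _)]
  · rw [mul_comm]
    exact (mul_le_mul_of_nonneg_left (min_le_left _ _) (by positivity)).trans hδreach.le

lemma exists_separated_cube_subset {O : Set PointedProperMetricSpace} (hO : IsOpen O)
    {p : PointedProperMetricSpace} (hp : IsCAT0Space p.carrier) (hpO : p ∈ O) (N : ℕ) :
    ∃ F : (Fin N → unitInterval) → PointedProperMetricSpace, Continuous F ∧
      (∀ x, IsCAT0Space (F x).carrier) ∧ (∀ x, F x ∈ O) ∧
      ∃ δ > 0, ∀ x y i, x i = 0 → y i = 1 → δ ≤ dist (F x) (F y) := by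
  obtain ⟨r, hr⟩ := (p.tendsto_truncate.eventually (hO.mem_nhds hpO)).exists
  obtain ⟨ε, hε, hball⟩ := Metric.isOpen_iff.1 hO _ hr
  have : CompactSpace (Metric.closedBall p.pt (r : ℝ)) :=
    isCompact_iff_compactSpace.1 (isCompact_closedBall _ _)
  obtain ⟨F, hF, hcat, hnear, hsep⟩ :=
    exists_separated_cube (hp.closedBall p.pt r) (p.truncate r).pt N hε
  exact ⟨F, hF, hcat, fun x => hball (Metric.mem_ball'.2 (hnear x)), hsep⟩

/-- The function induced on pointed isometry classes by the distance to `S`. -/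
noncomputable def infDistClass (S : Set PointedProperMetricSpace) : PGHSpace → ℝ :=
  Quotient.lift (Metric.infDist · S) fun _ _ h =>
    ((inseparable_of_equiv h).map (Metric.continuous_infDist_pt S)).eq

lemma continuous_infDistClass (S : Set PointedProperMetricSpace) :
    Continuous (infDistClass S) :=
  (Metric.continuous_infDist_pt S).quotient_lift _

end PointedProperMetricSpace

open PointedProperMetricSpace in
theorem not_covDimLE_of_isOpen_PGHCat0 {U : Set PGHCat0} (hU : IsOpen U) (hne : U.Nonempty)
    (n : ℕ) : ¬CovDimLE U n := by
  obtain ⟨O, hO, rfl⟩ := isOpen_induced_iff.1 hU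
  obtain ⟨⟨x, hx⟩, hxO⟩ := hne
  obtain ⟨p, rfl⟩ := Quotient.exists_rep x
  obtain ⟨F, hF, hcat, hFO, δ, hδ, hsep⟩ := exists_separated_cube_subset
    (hO.preimage continuous_quotient_mk') (mk_mem_PGHCat0.1 hx) hxO (n + 1)
  let f (x : Fin (n + 1) → unitInterval) : ↥((↑) ⁻¹' O : Set PGHCat0) :=
    ⟨⟨Quotient.mk _ (F x), mk_mem_PGHCat0.2 (hcat x)⟩, hFO x⟩
  have hclass : Continuous fun x => (Quotient.mk _ (F x) : PGHSpace) :=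
    continuous_quotient_mk'.comp hF
  have hf : Continuous f := (hclass.subtype_mk _).subtype_mk _
  let φ (i : Fin (n + 1)) (x : ↥((↑) ⁻¹' O : Set PGHCat0)) : ℝ :=
    infDistClass (F '' {z | z i = 0}) (x : PGHCat0)
  have hφ (i : Fin (n + 1)) : Continuous (φ i) :=
    (continuous_infDistClass _).comp (continuous_subtype_val.comp continuous_subtype_val)
  refine not_covDimLE_of_continuous_cube (by simp) hf
    (A := fun i => {x | φ i x ≤ 0}) (B := fun i => {x | δ ≤ φ i x})
    (fun i => isClosed_le (hφ i) continuous_const) (fun i => isClosed_le continuous_const (hφ i))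
    (fun i => Set.disjoint_left.2 fun x hA hB => (hδ.trans_le (hB.trans hA)).false)
    (fun x i hxi => ?_) fun x i hxi => ?_
  · exact (Metric.infDist_zero_of_mem (Set.mem_image_of_mem F hxi)).le
  · have hface : {z : Fin (n + 1) → unitInterval | z i = 0}.Nonempty := ⟨0, rfl⟩
    refine (Metric.le_infDist (hface.image F)).2 ?_
    rintro _ ⟨z, hz, rfl⟩
    rw [dist_comm]
    exact hsep z x i hz hxi

/-- The set `𝒫𝒵` of all pointed proper CAT(0) metric
spaces is path-connected as a subspace of `(𝒫ℳ, d_pGH)`, and every nonempty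
open subset of `𝒫𝒵` has infinite covering dimension. -/
theorem statement10 :
    PathConnectedSpace ↥PGHCat0 ∧
    ∀ U : Set ↥PGHCat0, IsOpen U → U.Nonempty →
      ¬ ∃ n : ℕ, CovDimLE ↥U n := by
  refine ⟨isPathConnected_iff_pathConnectedSpace.1 isPathConnected_PGHCat0, ?_⟩
  rintro U hU hne ⟨n, hn⟩
  exact not_covDimLE_of_isOpen_PGHCat0 hU hne n hn
end

section
/- Let 𝒮 be any one of the classes 𝒞, 𝒫, 𝒢, 𝒵 of compact metric spaces (connected, path-connected, geodesic, CAT(0), respectively), viewed as a subspace of the Gromov–Hausdorff space. Let n ≥ 1, m ≥ 2, let H be a compact metrizable space with n+1 distinct points v_1, …, v_{n+1}, and set H^× = H \ {v_1, …, v_{n+1}}. Let (X_1,d_1), …, (X_{n+1},d_{n+1}) ∈ 𝒮 satisfy d_GH((X_i,d_i),(X_j,d_j)) > 0 for all distinct i, j. Then there exists a continuous map F : H × {1,…,m} → 𝒮 (where {1,…,m} carries the discrete topology) such that (1) F(v_i, j) = (X_i,d_i) for all i ∈ {1,…,n+1} and j ∈ {1,…,m}, and (2) F is injective on H^× × {1,…,m}.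 -/
open GromovHausdorff

/-- The subset `𝒞` of the Gromov–Hausdorff space of connected spaces. -/
def GHConnected : Set GHSpace := {p | ConnectedSpace p.Rep}

/-- The subset `𝒫` of the Gromov–Hausdorff space of path-connected spaces. -/
def GHPathConnected : Set GHSpace := {p | PathConnectedSpace p.Rep}

/-- The subset `𝒢` of the Gromov–Hausdorff space of geodesic spaces. -/
def GHGeodesic : Set GHSpace := {p | IsGeodesicSpace p.Rep}

/-- The subset `𝒵` of the Gromov–Hausdorff space of CAT(0) spaces. -/
def GHCat0 : Set GHSpace := {p | IsCAT0Space p.Rep}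

/-!
Place the spaces `p i` in `ℓ^∞`, each through the origin, together with two unit segments, and
scale these factors by weights depending continuously on the parameter `y`. The `ℓ²` product of the
scaled factors is a body `P y`, to which infinitely many segments, the legs, are glued at the
origin. Over `A i` the weight of `p i` is one and all other weights and all leg lengths vanish, so
only `p i` remains. Elsewhere the two segments of the product keep positive length, so the free
ends of the legs are the only points near which the space looks one-dimensional and unbranched:
locally, distances to such a point separate points. An isometry therefore preserves these ends and
their mutual distances `l j + l k`. As there are at least three of them, this determines the
lengths, and in decreasing order they spell out the coordinates of `y` in the Hilbert cube.

Products, scalings and wedges stay within each of the four classes; for CAT(0) this is a matter of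
adding up, scaling or splitting at the base point the Bruhat–Tits (CN) inequality.
-/

open Set TopologicalSpace
open scoped Pointwise

/-! ### Geodesic segments and the comparison inequality -/

section Segments

variable {E F : Type*} [MetricSpace E] [MetricSpace F]
  {γ γ₁ γ₂ : ℝ → E} {o q x y z : E} {s t : ℝ}

/-- `γ` restricts to a constant-speed geodesic from `x` to `y` on `[0, 1]`; its values elsewhere
are irrelevant. -/
structure IsGeodesicSegment (γ : ℝ → E) (x y : E) : Prop where
  source : γ 0 = x
  target : γ 1 = y
  dist_eq : ∀ s ∈ Icc (0 : ℝ) 1, ∀ t ∈ Icc (0 : ℝ) 1, dist (γ s) (γ t) = |s - t| * dist x y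

/-- The Bruhat–Tits (CN) inequality at `z`, for a point `q` standing at time `t` on a geodesic from
`x` to `y`. -/
def CNInequality (x y z q : E) (t : ℝ) : Prop :=
  dist z q ^ 2 ≤ (1 - t) * dist z x ^ 2 + t * dist z y ^ 2 - t * (1 - t) * dist x y ^ 2

lemma CNInequality.symm (h : CNInequality x y z q t) : CNInequality y x z q (1 - t) := by
  unfold CNInequality at h ⊢
  rw [dist_comm y x]
  linarith

lemma CNInequality.map {f : E → F} (hf : Isometry f) (h : CNInequality x y z q t) :
    CNInequality (f x) (f y) (f z) (f q) t := by
  simpa only [CNInequality, hf.dist_eq] using h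

lemma CNInequality.of_dist_eq_add (ht : t ∈ Icc (0 : ℝ) 1) (hq : dist z q = dist z o + dist o q)
    (hx : dist z x = dist z o + dist o x) (hy : dist z y = dist z o + dist o y)
    (ho : CNInequality x y o q t) : CNInequality x y z q t := by
  have ht' : 0 ≤ 1 - t := sub_nonneg.2 ht.2
  have hsq : (dist o x - dist o y) ^ 2 ≤ dist x y ^ 2 := by
    rw [dist_comm o x, dist_comm o y]
    exact sq_le_sq' (by linarith [dist_triangle y x o, dist_comm x y])
      (by linarith [dist_triangle x y o])
  have hconvex : dist o q ≤ (1 - t) * dist o x + t * dist o y := by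
    refine le_of_sq_le_sq (ho.trans ?_) (by have := ht.1; positivity)
    nlinarith [mul_nonneg (mul_nonneg ht.1 ht') (sub_nonneg.2 hsq)]
  unfold CNInequality at ho ⊢
  rw [hq, hx, hy]
  nlinarith [mul_le_mul_of_nonneg_left hconvex (dist_nonneg (x := z) (y := o))]

namespace IsGeodesicSegment

lemma dist_left (h : IsGeodesicSegment γ x y) (ht : t ∈ Icc (0 : ℝ) 1) :
    dist x (γ t) = t * dist x y := by
  have h0t := h.dist_eq 0 (by simp) t ht
  rwa [h.source, zero_sub, abs_neg, abs_of_nonneg ht.1] at h0t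

lemma dist_right (h : IsGeodesicSegment γ x y) (ht : t ∈ Icc (0 : ℝ) 1) :
    dist (γ t) y = (1 - t) * dist x y := by
  have ht1 := h.dist_eq t ht 1 (by simp)
  rwa [h.target, abs_sub_comm, abs_of_nonneg (sub_nonneg.2 ht.2)] at ht1

lemma map {f : E → F} (hf : Isometry f) (h : IsGeodesicSegment γ x y) :
    IsGeodesicSegment (f ∘ γ) (f x) (f y) where
  source := congrArg f h.source
  target := congrArg f h.target
  dist_eq s hs t ht := by simpa only [Function.comp_apply, hf.dist_eq] using h.dist_eq s hs t ht

lemma of_dist_le (h0 : γ 0 = x) (h1 : γ 1 = y)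
    (h : ∀ ⦃s t : ℝ⦄, 0 ≤ s → s ≤ t → t ≤ 1 → dist (γ s) (γ t) ≤ (t - s) * dist x y) :
    IsGeodesicSegment γ x y := by
  have eq_of_le ⦃s t : ℝ⦄ (hs : 0 ≤ s) (hst : s ≤ t) (ht : t ≤ 1) :
      dist (γ s) (γ t) = (t - s) * dist x y := by
    have hxs := h le_rfl hs (hst.trans ht)
    have hty := h (hs.trans hst) ht le_rfl
    rw [h0] at hxs
    rw [h1] at hty
    linarith [h hs hst ht, dist_triangle4 x (γ s) (γ t) y]
  refine ⟨h0, h1, fun s hs t ht => ?_⟩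
  rcases le_total s t with hst | hts
  · rw [eq_of_le hs.1 hst ht.2, abs_sub_comm, abs_of_nonneg (sub_nonneg.2 hst)]
  · rw [dist_comm, eq_of_le ht.1 hts hs.2, abs_of_nonneg (sub_nonneg.2 hts)]

end IsGeodesicSegment

/-- The path that follows `γ₁ : x ⟶ o` and then the reverse of `γ₂ : y ⟶ o`, with constant speed
if these are geodesics of lengths `a` and `b`. -/
noncomputable def geodesicConcat {E : Type*} (γ₁ γ₂ : ℝ → E) (a b : ℝ) (t : ℝ) : E :=
  if t * (a + b) ≤ a then γ₁ (t * (a + b) / a) else γ₂ ((1 - t) * (a + b) / b)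

lemma geodesicConcat_cases {E : Type*} (γ₁ γ₂ : ℝ → E) {a b t : ℝ} (ha : 0 ≤ a) (hb : 0 ≤ b)
    (ht : t ∈ Icc (0 : ℝ) 1) :
    (t * (a + b) ≤ a ∧
      ∃ s ∈ Icc (0 : ℝ) 1, s * a = t * (a + b) ∧ geodesicConcat γ₁ γ₂ a b t = γ₁ s) ∨
    (a < t * (a + b) ∧
      ∃ s ∈ Icc (0 : ℝ) 1, s * b = (1 - t) * (a + b) ∧ geodesicConcat γ₁ γ₂ a b t = γ₂ s) := by
  have rescale {r d : ℝ} (hr : 0 ≤ r) (hrd : r ≤ d) : r / d ∈ Icc (0 : ℝ) 1 ∧ r / d * d = r :=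
    ⟨⟨div_nonneg hr (hr.trans hrd), div_le_one_of_le₀ hrd (hr.trans hrd)⟩,
      div_mul_cancel_of_imp fun hd => le_antisymm (hrd.trans hd.le) hr⟩
  rcases le_or_gt (t * (a + b)) a with hta | hta
  · obtain ⟨hmem, hmul⟩ := rescale (mul_nonneg ht.1 (add_nonneg ha hb)) hta
    exact .inl ⟨hta, _, hmem, hmul, if_pos hta⟩
  · obtain ⟨hmem, hmul⟩ := rescale (d := b)
      (mul_nonneg (sub_nonneg.2 ht.2) (add_nonneg ha hb)) (by linarith)
    exact .inr ⟨hta, _, hmem, hmul, if_neg hta.not_ge⟩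

lemma IsGeodesicSegment.concat (h₁ : IsGeodesicSegment γ₁ x o) (h₂ : IsGeodesicSegment γ₂ y o)
    (hxy : dist x y = dist x o + dist y o) :
    IsGeodesicSegment (geodesicConcat γ₁ γ₂ (dist x o) (dist y o)) x y := by
  refine .of_dist_le ?_ ?_ fun s t hs hst ht => ?_
  · simp [geodesicConcat, h₁.source]
  · rcases eq_or_ne y o with rfl | hyo
    · rcases eq_or_ne x y with rfl | hne
      · simp [geodesicConcat, h₁.source]
      · simp [geodesicConcat, h₁.target, hne]
    · simp [geodesicConcat, h₂.source, (dist_pos.2 hyo).not_ge]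
  have hspeed : s * dist x y ≤ t * dist x y := by gcongr
  rw [hxy] at hspeed ⊢
  have abs_mul_dist (r : ℝ) (p q : E) : |r| * dist p q = |r * dist p q| := by
    rw [abs_mul, abs_of_nonneg dist_nonneg]
  have cases {r : ℝ} := geodesicConcat_cases γ₁ γ₂ (t := r) (dist_nonneg (x := x) (y := o))
    (dist_nonneg (x := y) (y := o))
  rcases cases ⟨hs, hst.trans ht⟩ with ⟨-, s', hs', hs_eq, hγs⟩ | ⟨hso, s', hs', hs_eq, hγs⟩ <;>
    rcases cases ⟨hs.trans hst, ht⟩ with ⟨hto, t', ht', ht_eq, hγt⟩ | ⟨-, t', ht', ht_eq, hγt⟩ <;>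
    rw [hγs, hγt]
  · rw [h₁.dist_eq s' hs' t' ht', abs_mul_dist, abs_le]
    constructor <;> linarith
  · have := dist_triangle (γ₁ s') o (γ₂ t')
    rw [h₁.dist_right hs', dist_comm o, h₂.dist_right ht'] at this
    linarith
  · linarith
  · rw [h₂.dist_eq s' hs' t' ht', abs_mul_dist, abs_le]
    constructor <;> linarith

lemma CNInequality.extend (ht : 0 ≤ t) (hst : s * dist x o = t * dist x y)
    (hxy : dist x y = dist x o + dist y o) (hzy : dist z y = dist z o + dist y o)
    (hz : CNInequality x o z q s) : CNInequality x y z q t := by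
  have hgap : 0 ≤ (s - t) * (dist z x ^ 2 - (dist z o - dist x o) ^ 2) := by
    rcases eq_or_ne x o with rfl | hxo
    · simp
    refine mul_nonneg ?_ (sub_nonneg.2 (sq_le_sq' ?_ ?_))
    · refine nonneg_of_mul_nonneg_left (b := dist x o) ?_ (dist_pos.2 hxo)
      nlinarith [mul_nonneg ht (dist_nonneg (x := y) (y := o))]
    · linarith [dist_triangle x z o, dist_comm x z]
    · linarith [dist_triangle z x o]
  unfold CNInequality at hz ⊢
  rw [hxy] at hst ⊢
  rw [hzy]
  refine hz.trans (sub_nonneg.1 (hgap.trans_eq ?_))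
  linear_combination
    (2 * dist z o - 2 * dist x o + s * dist x o + t * (dist x o + dist y o)) * hst

lemma CNInequality.of_branch (ht : 0 ≤ t) (hq : dist q o = dist x o - t * dist x y)
    (hxy : dist x y = dist x o + dist y o) (hzx : dist z x = dist z o + dist x o)
    (hzq : dist z q = dist z o + dist q o) : CNInequality x y z q t := by
  have hzy : (dist z o - dist y o) ^ 2 ≤ dist z y ^ 2 :=
    sq_le_sq' (by linarith [dist_triangle y z o, dist_comm y z]) (by linarith [dist_triangle z y o])
  unfold CNInequality
  rw [hzq, hzx, hq, hxy]
  nlinarith [mul_le_mul_of_nonneg_left hzy ht]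

end Segments

/-! ### Geodesic and CAT(0) subsets -/

section GeodesicSets

variable {E F : Type*} [MetricSpace E] [MetricSpace F]

/-- Any two points of `A` are joined by a geodesic inside `A`. -/
def IsGeodesicSet (A : Set E) : Prop :=
  ∀ x ∈ A, ∀ y ∈ A, ∃ γ, IsGeodesicSegment γ x y ∧ MapsTo γ (Icc 0 1) A

/-- Any two points of `A` are joined by a geodesic inside `A` satisfying the CN inequality at every
point of `A`. This one geodesic is then the only one, so that nothing is lost with respect to
`IsCAT0Space`, where the inequality is required of all geodesics. -/
def IsCAT0Set (A : Set E) : Prop :=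
  ∀ x ∈ A, ∀ y ∈ A, ∃ γ, IsGeodesicSegment γ x y ∧ MapsTo γ (Icc 0 1) A ∧
    ∀ z ∈ A, ∀ t ∈ Icc (0 : ℝ) 1, CNInequality x y z (γ t) t

lemma IsCAT0Set.isGeodesicSet {A : Set E} (h : IsCAT0Set A) : IsGeodesicSet A := fun x hx y hy =>
  let ⟨γ, hγ, hγA, _⟩ := h x hx y hy
  ⟨γ, hγ, hγA⟩

lemma IsGeodesicSet.image {f : E → F} (hf : Isometry f) {A : Set E} (h : IsGeodesicSet A) :
    IsGeodesicSet (f '' A) := by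
  rintro _ ⟨x, hx, rfl⟩ _ ⟨y, hy, rfl⟩
  obtain ⟨γ, hγ, hγA⟩ := h x hx y hy
  exact ⟨f ∘ γ, hγ.map hf, (mapsTo_image f A).comp hγA⟩

lemma IsCAT0Set.image {f : E → F} (hf : Isometry f) {A : Set E} (h : IsCAT0Set A) :
    IsCAT0Set (f '' A) := by
  rintro _ ⟨x, hx, rfl⟩ _ ⟨y, hy, rfl⟩
  obtain ⟨γ, hγ, hγA, hcn⟩ := h x hx y hy
  refine ⟨f ∘ γ, hγ.map hf, (mapsTo_image f A).comp hγA, ?_⟩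
  rintro _ ⟨z, hz, rfl⟩ t ht
  exact (hcn z hz t ht).map hf

lemma IsGeodesicSegment.exists_lift {f : E → F} (hf : Isometry f) {γ : ℝ → F} {x y : E}
    (h : IsGeodesicSegment γ (f x) (f y)) (hγ : MapsTo γ (Icc 0 1) (range f)) :
    ∃ δ, IsGeodesicSegment δ x y ∧ EqOn (f ∘ δ) γ (Icc 0 1) := by
  have : Nonempty E := ⟨x⟩
  choose! δ hδ using hγ
  refine ⟨δ, ⟨hf.injective ?_, hf.injective ?_, fun s hs t ht => ?_⟩, fun t ht => hδ ht⟩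
  · rw [hδ (by simp), h.source]
  · rw [hδ (by simp), h.target]
  · rw [← hf.dist_eq, hδ hs, hδ ht, h.dist_eq s hs t ht, hf.dist_eq]

lemma IsGeodesicSegment.eqOn_of_cnInequality {γ δ : ℝ → E} {x y : E} (h : IsGeodesicSegment γ x y)
    (hcn : ∀ t ∈ Icc (0 : ℝ) 1, CNInequality x y (γ t) (δ t) t) : EqOn γ δ (Icc 0 1) := by
  intro t ht
  have hsq := hcn t ht
  rw [CNInequality, dist_comm _ x, h.dist_left ht, h.dist_right ht] at hsq
  refine dist_eq_zero.1 (pow_eq_zero_iff two_ne_zero |>.1 (le_antisymm (hsq.trans_eq ?_)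
    (sq_nonneg _)))
  ring

lemma isGeodesicSpace_iff_isGeodesicSet_range {f : E → F} (hf : Isometry f) :
    IsGeodesicSpace E ↔ IsGeodesicSet (range f) := by
  constructor
  · rintro h _ ⟨x, rfl⟩ _ ⟨y, rfl⟩
    obtain ⟨γ, h0, h1, hd⟩ := h x y
    exact ⟨f ∘ γ, IsGeodesicSegment.map hf ⟨h0, h1, hd⟩, fun t _ => mem_range_self (γ t)⟩
  · intro h x y
    obtain ⟨γ, hγ, hγf⟩ := h (f x) (mem_range_self x) (f y) (mem_range_self y)
    obtain ⟨δ, hδ, -⟩ := hγ.exists_lift hf hγf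
    exact ⟨δ, hδ.source, hδ.target, hδ.dist_eq⟩

lemma isCAT0Space_iff_isCAT0Set_range {f : E → F} (hf : Isometry f) :
    IsCAT0Space E ↔ IsCAT0Set (range f) := by
  constructor
  · rintro ⟨hgeo, hcn⟩ _ ⟨x, rfl⟩ _ ⟨y, rfl⟩
    obtain ⟨γ, h0, h1, hd⟩ := hgeo x y
    refine ⟨f ∘ γ, IsGeodesicSegment.map hf ⟨h0, h1, hd⟩, fun t _ => mem_range_self (γ t), ?_⟩
    rintro _ ⟨z, rfl⟩ t ht
    exact CNInequality.map hf (hcn x y z γ h0 h1 hd t ht)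
  · refine fun h => ⟨(isGeodesicSpace_iff_isGeodesicSet_range hf).2 h.isGeodesicSet, ?_⟩
    intro x y z δ h0 h1 hd t ht
    obtain ⟨γ, -, -, hcn⟩ := h (f x) (mem_range_self x) (f y) (mem_range_self y)
    have hδ : IsGeodesicSegment (f ∘ δ) (f x) (f y) := IsGeodesicSegment.map hf ⟨h0, h1, hd⟩
    have hδγ : f (δ t) = γ t :=
      hδ.eqOn_of_cnInequality (fun s hs => hcn _ (mem_range_self (δ s)) s hs) ht
    have hz := hcn (f z) (mem_range_self z) t ht
    rw [← hδγ] at hz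
    simpa only [CNInequality, hf.dist_eq] using hz

end GeodesicSets

section Wedge

variable {E ι : Type*} [MetricSpace E] {o : E} {A : ι → Set E}

/-- The sets `A i` form a metric wedge with base point `o`: this point is common to all of them,
and the shortest way from one of them to another one passes through it. -/
structure IsWedge (o : E) (A : ι → Set E) : Prop where
  mem : ∀ i, o ∈ A i
  dist_eq : ∀ i j, i ≠ j → ∀ x ∈ A i, ∀ y ∈ A j, dist x y = dist x o + dist y o

namespace IsWedge

lemma isGeodesicSet_iUnion (h : IsWedge o A) (hA : ∀ i, IsGeodesicSet (A i)) :
    IsGeodesicSet (⋃ i, A i) := by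
  intro x hx y hy
  obtain ⟨i, hi⟩ := mem_iUnion.1 hx
  obtain ⟨j, hj⟩ := mem_iUnion.1 hy
  rcases eq_or_ne i j with rfl | hij
  · obtain ⟨γ, hγ, hγA⟩ := hA i x hi y hj
    exact ⟨γ, hγ, fun t ht => mem_iUnion_of_mem i (hγA ht)⟩
  · obtain ⟨γ₁, hγ₁, hγA₁⟩ := hA i x hi o (h.mem i)
    obtain ⟨γ₂, hγ₂, hγA₂⟩ := hA j y hj o (h.mem j)
    refine ⟨_, hγ₁.concat hγ₂ (h.dist_eq i j hij x hi y hj), fun t ht => ?_⟩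
    rcases geodesicConcat_cases γ₁ γ₂ (dist_nonneg (x := x) (y := o))
      (dist_nonneg (x := y) (y := o)) ht with ⟨-, s, hs, -, hγ⟩ | ⟨-, s, hs, -, hγ⟩ <;> rw [hγ]
    exacts [mem_iUnion_of_mem i (hγA₁ hs), mem_iUnion_of_mem j (hγA₂ hs)]

lemma cnInequality (h : IsWedge o A) {i j : ι} (hij : i ≠ j) {x y z : E} {γ : ℝ → E} {s t : ℝ}
    (hx : x ∈ A i) (hy : y ∈ A j)
    (hz : z ∈ ⋃ i, A i) (hγ : IsGeodesicSegment γ x o) (hγA : MapsTo γ (Icc 0 1) (A i))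
    (hcn : ∀ z ∈ A i, ∀ t ∈ Icc (0 : ℝ) 1, CNInequality x o z (γ t) t)
    (hs : s ∈ Icc (0 : ℝ) 1) (ht : 0 ≤ t) (hst : s * dist x o = t * dist x y) :
    CNInequality x y z (γ s) t := by
  have hxy := h.dist_eq i j hij x hx y hy
  obtain ⟨k, hk⟩ := mem_iUnion.1 hz
  rcases eq_or_ne k i with rfl | hki
  · exact (hcn z hk s hs).extend ht hst hxy (h.dist_eq k j hij z hk y hy)
  · refine .of_branch ht ?_ hxy (h.dist_eq k i hki z hk x hx) (h.dist_eq k i hki z hk _ (hγA hs))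
    rw [hγ.dist_right hs, ← hst]
    ring

lemma isCAT0Set_iUnion (h : IsWedge o A) (hA : ∀ i, IsCAT0Set (A i)) :
    IsCAT0Set (⋃ i, A i) := by
  intro x hx y hy
  obtain ⟨i, hi⟩ := mem_iUnion.1 hx
  obtain ⟨j, hj⟩ := mem_iUnion.1 hy
  rcases eq_or_ne i j with rfl | hij
  · obtain ⟨γ, hγ, hγA, hcn⟩ := hA i x hi y hj
    refine ⟨γ, hγ, fun t ht => mem_iUnion_of_mem i (hγA ht), fun z hz t ht => ?_⟩
    obtain ⟨k, hk⟩ := mem_iUnion.1 hz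
    rcases eq_or_ne k i with rfl | hki
    · exact hcn z hk t ht
    · have hd' {w : E} (hw : w ∈ A i) : dist z w = dist z o + dist o w := by
        rw [h.dist_eq k i hki z hk w hw, dist_comm w]
      exact (hcn o (h.mem i) t ht).of_dist_eq_add ht (hd' (hγA ht)) (hd' hi) (hd' hj)
  · obtain ⟨γ₁, hγ₁, hγA₁, hcn₁⟩ := hA i x hi o (h.mem i)
    obtain ⟨γ₂, hγ₂, hγA₂, hcn₂⟩ := hA j y hj o (h.mem j)
    have hcases {t : ℝ} := geodesicConcat_cases γ₁ γ₂ (t := t) (dist_nonneg (x := x) (y := o))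
      (dist_nonneg (x := y) (y := o))
    have hxy := h.dist_eq i j hij x hi y hj
    refine ⟨_, hγ₁.concat hγ₂ hxy, fun t ht => ?_, fun z hz t ht => ?_⟩ <;>
      rcases hcases ht with ⟨-, s, hs, hst, hγ⟩ | ⟨-, s, hs, hst, hγ⟩ <;> rw [hγ]
    · exact mem_iUnion_of_mem i (hγA₁ hs)
    · exact mem_iUnion_of_mem j (hγA₂ hs)
    · exact h.cnInequality hij hi hj hz hγ₁ hγA₁ hcn₁ hs ht.1 (hxy ▸ hst)
    · have hcn := h.cnInequality hij.symm hj hi hz hγ₂ hγA₂ hcn₂ hs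
        (sub_nonneg.2 ht.2) (by rw [hst, dist_comm y x, hxy])
      simpa only [sub_sub_cancel] using hcn.symm

end IsWedge

end Wedge

section Constructions

lemma isCAT0Set_of_convex {E : Type*} [NormedAddCommGroup E] [InnerProductSpace ℝ E] {A : Set E}
    (hA : Convex ℝ A) : IsCAT0Set A := by
  refine fun x hx y hy => ⟨AffineMap.lineMap x y, ⟨by simp, by simp, fun s _ t _ => ?_⟩,
    fun t ht => hA.lineMap_mem hx hy ht, fun z _ t _ => ?_⟩
  · rw [dist_lineMap_lineMap, Real.dist_eq]
  · have hzq : z - AffineMap.lineMap x y t = (1 - t) • (z - x) + t • (z - y) := by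
      rw [AffineMap.lineMap_apply_module]
      module
    have hxy : x - y = (z - y) - (z - x) := by abel
    simp only [CNInequality, dist_eq_norm]
    rw [hzq, hxy, norm_add_sq_real, norm_sub_sq_real (z - y), real_inner_comm (z - x) (z - y),
      norm_smul, norm_smul, real_inner_smul_left, real_inner_smul_right, mul_pow, mul_pow,
      Real.norm_eq_abs, Real.norm_eq_abs, sq_abs, sq_abs]
    linarith

variable {E : Type*} [NormedAddCommGroup E] [NormedSpace ℝ E] {A : Set E}

lemma IsGeodesicSegment.const_smul {γ : ℝ → E} {x y : E} (h : IsGeodesicSegment γ x y) (c : ℝ) :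
    IsGeodesicSegment (fun t => c • γ t) (c • x) (c • y) where
  source := by rw [h.source]
  target := by rw [h.target]
  dist_eq s hs t ht := by
    rw [dist_smul₀, dist_smul₀, h.dist_eq s hs t ht]
    ring

lemma CNInequality.const_smul {x y z q : E} {t : ℝ} (h : CNInequality x y z q t) (c : ℝ) :
    CNInequality (c • x) (c • y) (c • z) (c • q) t := by
  simp only [CNInequality, dist_smul₀, mul_pow]
  linarith [mul_le_mul_of_nonneg_left h (sq_nonneg ‖c‖)]

lemma IsGeodesicSet.const_smul (h : IsGeodesicSet A) (c : ℝ) : IsGeodesicSet (c • A) := by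
  rintro _ ⟨x, hx, rfl⟩ _ ⟨y, hy, rfl⟩
  obtain ⟨γ, hγ, hγA⟩ := h x hx y hy
  exact ⟨_, hγ.const_smul c, fun t ht => smul_mem_smul_set (hγA ht)⟩

lemma IsCAT0Set.const_smul (h : IsCAT0Set A) (c : ℝ) : IsCAT0Set (c • A) := by
  rintro _ ⟨x, hx, rfl⟩ _ ⟨y, hy, rfl⟩
  obtain ⟨γ, hγ, hγA, hcn⟩ := h x hx y hy
  refine ⟨_, hγ.const_smul c, fun t ht => smul_mem_smul_set (hγA ht), ?_⟩
  rintro _ ⟨z, hz, rfl⟩ t ht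
  exact (hcn z hz t ht).const_smul c

end Constructions

section L2Products

variable {ι : Type*} {E : ι → Type*} {A : ∀ i, Set (E i)}

/-- The product of the sets `A i`, with the `ℓ²` product metric. -/
def l2Pi (A : ∀ i, Set (E i)) : Set (PiLp 2 E) := {x | ∀ i, x i ∈ A i}

lemma l2Pi_eq_image : l2Pi A = WithLp.toLp 2 '' univ.pi A :=
  Subset.antisymm (fun x hx => ⟨x, fun i _ => hx i, rfl⟩)
    (image_subset_iff.2 fun _ hx i => hx i (mem_univ i))

lemma isConnected_l2Pi [∀ i, TopologicalSpace (E i)] (h : ∀ i, IsConnected (A i)) :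
    IsConnected (l2Pi A) := by
  rw [l2Pi_eq_image]
  exact (isConnected_univ_pi.2 h).image _ (PiLp.continuous_toLp 2 E).continuousOn

lemma isPathConnected_l2Pi [∀ i, TopologicalSpace (E i)]
    (h : ∀ i, IsPathConnected (A i)) : IsPathConnected (l2Pi A) := by
  rw [l2Pi_eq_image]
  exact (IsPathConnected.pi h).image (PiLp.continuous_toLp 2 E)

variable [Fintype ι] [∀ i, MetricSpace (E i)]

lemma piLp_two_dist_sq (x y : PiLp 2 E) : dist x y ^ 2 = ∑ i, dist (x i) (y i) ^ 2 := by
  rw [PiLp.dist_eq_sum (by norm_num), ← Real.rpow_natCast, ← Real.rpow_mul (by positivity)]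
  norm_num

lemma IsGeodesicSegment.toLp {γ : ∀ i, ℝ → E i} {x y : PiLp 2 E}
    (h : ∀ i, IsGeodesicSegment (γ i) (x i) (y i)) :
    IsGeodesicSegment (fun t => WithLp.toLp 2 fun i => γ i t) x y where
  source := PiLp.ext fun i => (h i).source
  target := PiLp.ext fun i => (h i).target
  dist_eq s hs t ht := by
    refine (sq_eq_sq₀ dist_nonneg (by positivity)).1 ?_
    simp only [mul_pow, piLp_two_dist_sq, (h _).dist_eq s hs t ht, Finset.mul_sum]

lemma CNInequality.toLp {x y z q : PiLp 2 E} {t : ℝ}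
    (h : ∀ i, CNInequality (x i) (y i) (z i) (q i) t) : CNInequality x y z q t := by
  simp only [CNInequality, piLp_two_dist_sq, Finset.mul_sum, ← Finset.sum_add_distrib,
    ← Finset.sum_sub_distrib]
  exact Finset.sum_le_sum fun i _ => h i

lemma isGeodesicSet_l2Pi (h : ∀ i, IsGeodesicSet (A i)) : IsGeodesicSet (l2Pi A) := by
  intro x hx y hy
  choose γ hγ hγA using fun i => h i (x i) (hx i) (y i) (hy i)
  exact ⟨_, .toLp hγ, fun t ht i => hγA i ht⟩

lemma isCAT0Set_l2Pi (h : ∀ i, IsCAT0Set (A i)) : IsCAT0Set (l2Pi A) := by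
  intro x hx y hy
  choose γ hγ hγA hcn using fun i => h i (x i) (hx i) (y i) (hy i)
  exact ⟨_, .toLp hγ, fun t ht i => hγA i ht,
    fun z hz t ht => .toLp fun i => hcn i (z i) (hz i) t ht⟩

end L2Products

/-! ### Attaching legs to a pointed set -/

section Legs

/-- The `ℓ¹` sum of `V` and the space of summable sequences. -/
abbrev LegSpace (V : Type*) : Type _ := WithLp 1 (V × lp (fun _ : ℕ => ℝ) 1)

variable {V : Type*} [NormedAddCommGroup V]

/-- The copy of `x : V` in `LegSpace V`. -/
noncomputable def body (x : V) : LegSpace V := WithLp.toLp 1 (x, 0)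

/-- The point at distance `|t|` from the origin on the `k`-th coordinate axis of `LegSpace V`. -/
noncomputable def legPoint (V : Type*) [NormedAddCommGroup V] (k : ℕ) (t : ℝ) : LegSpace V :=
  WithLp.toLp 1 (0, lp.single 1 k t)

lemma body_zero : body (0 : V) = 0 := rfl

lemma legPoint_zero (k : ℕ) : legPoint V k 0 = 0 := by
  rw [legPoint, lp.single_zero]
  rfl

lemma isometry_body : Isometry (body : V → LegSpace V) :=
  .of_dist_eq fun x y => by
    rw [WithLp.prod_dist_eq_of_L1]
    simp [body]

lemma isometry_legPoint (k : ℕ) : Isometry (legPoint V k) :=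
  .of_dist_eq fun s t => by
    rw [WithLp.prod_dist_eq_of_L1]
    simp [legPoint, (lp.isometry_single (E := fun _ : ℕ => ℝ) (p := 1) k).dist_eq]

lemma dist_legPoint_zero (k : ℕ) (t : ℝ) : dist (legPoint V k t) 0 = |t| := by
  rw [← legPoint_zero k, (isometry_legPoint k).dist_eq, Real.dist_0_eq_abs]

lemma dist_body_legPoint (x : V) (k : ℕ) (t : ℝ) :
    dist (body x) (legPoint V k t) = dist (body x) 0 + dist (legPoint V k t) 0 := by
  simp [WithLp.prod_dist_eq_of_L1, body, legPoint]

lemma dist_legPoint_legPoint {j k : ℕ} (h : j ≠ k) (s t : ℝ) :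
    dist (legPoint V j s) (legPoint V k t) = dist (legPoint V j s) 0 + dist (legPoint V k t) 0 := by
  have hnorm : ‖(lp.single 1 j s - lp.single 1 k t : lp (fun _ : ℕ => ℝ) 1)‖ = |s| + |t| := by
    rw [lp.norm_eq_tsum_rpow (by simp), tsum_eq_sum (s := {j, k}), Finset.sum_pair h]
    · simp [lp.single_apply, h, h.symm]
    · intro i hi
      simp only [Finset.mem_insert, Finset.mem_singleton, not_or] at hi
      simp [hi.1, hi.2]
  rw [dist_legPoint_zero, dist_legPoint_zero, WithLp.prod_dist_eq_of_L1, ← hnorm, ← dist_eq_norm]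
  simp [legPoint]

/-- The part of `attachLegs P l` lying over the index `i`: the body for `none`, a leg for
`some k`. -/
def legPiece (P : Set V) (l : ℕ → ℝ) : Option ℕ → Set (LegSpace V)
  | none => body '' P
  | some k => legPoint V k '' Icc 0 (l k)

/-- The set `P` with, for each `k`, a segment of length `l k` glued to it at the origin. -/
def attachLegs (P : Set V) (l : ℕ → ℝ) : Set (LegSpace V) := ⋃ i, legPiece P l i

variable {P : Set V} {l : ℕ → ℝ}

lemma body_mem_attachLegs {x : V} (hx : x ∈ P) : body x ∈ attachLegs P l :=
  mem_iUnion_of_mem none (mem_image_of_mem body hx)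

lemma legPoint_mem_attachLegs {k : ℕ} {t : ℝ} (ht : t ∈ Icc 0 (l k)) :
    legPoint V k t ∈ attachLegs P l :=
  mem_iUnion_of_mem (some k) (mem_image_of_mem (legPoint V k) ht)

lemma isWedge_legPiece (hP : 0 ∈ P) (hl : 0 ≤ l) : IsWedge 0 (legPiece P l) where
  mem
    | none => ⟨0, hP, body_zero⟩
    | some k => ⟨0, ⟨le_rfl, hl k⟩, legPoint_zero k⟩
  dist_eq
    | none, none, h, _, _, _, _ => absurd rfl h
    | none, some k, _, _, ⟨x, _, hx⟩, _, ⟨t, _, ht⟩ => by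
      rw [← hx, ← ht, dist_body_legPoint]
    | some k, none, _, _, ⟨t, _, ht⟩, _, ⟨x, _, hx⟩ => by
      rw [← hx, ← ht, dist_comm, dist_body_legPoint, add_comm]
    | some j, some k, h, _, ⟨s, _, hs⟩, _, ⟨t, _, ht⟩ => by
      rw [← hs, ← ht, dist_legPoint_legPoint (ne_of_apply_ne some h)]

lemma isGeodesicSet_attachLegs (hP : 0 ∈ P) (hl : 0 ≤ l) (h : IsGeodesicSet P) :
    IsGeodesicSet (attachLegs P l) :=
  (isWedge_legPiece hP hl).isGeodesicSet_iUnion fun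
    | none => h.image isometry_body
    | some k => (isCAT0Set_of_convex (convex_Icc 0 (l k))).isGeodesicSet.image (isometry_legPoint k)

lemma isCAT0Set_attachLegs (hP : 0 ∈ P) (hl : 0 ≤ l) (h : IsCAT0Set P) :
    IsCAT0Set (attachLegs P l) :=
  (isWedge_legPiece hP hl).isCAT0Set_iUnion fun
    | none => h.image isometry_body
    | some k => (isCAT0Set_of_convex (convex_Icc 0 (l k))).image (isometry_legPoint k)

lemma isConnected_attachLegs (hP : 0 ∈ P) (hl : 0 ≤ l) (h : IsConnected P) :
    IsConnected (attachLegs P l) :=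
  ⟨⟨body 0, body_mem_attachLegs hP⟩, isPreconnected_iUnion
    ⟨0, mem_iInter.2 (isWedge_legPiece hP hl).mem⟩ fun
    | none => h.isPreconnected.image body isometry_body.continuous.continuousOn
    | some k => isPreconnected_Icc.image _ (isometry_legPoint k).continuous.continuousOn⟩

lemma isPathConnected_attachLegs (hP : 0 ∈ P) (hl : 0 ≤ l) (h : IsPathConnected P) :
    IsPathConnected (attachLegs P l) := by
  have hpiece : ∀ i, IsPathConnected (legPiece P l i)
    | none => h.image isometry_body.continuous
    | some k => ((convex_Icc 0 (l k)).isPathConnected ⟨0, le_rfl, hl k⟩).image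
        (isometry_legPoint k).continuous
  have h0 := (isWedge_legPiece hP hl).mem
  refine ⟨0, mem_iUnion_of_mem none (h0 none), fun {y} hy => ?_⟩
  obtain ⟨i, hi⟩ := mem_iUnion.1 hy
  exact ((hpiece i).joinedIn 0 (h0 i) y hi).mono (subset_iUnion (legPiece P l) i)

lemma attachLegs_zero (hP : 0 ∈ P) : attachLegs P 0 = body '' P := by
  refine subset_antisymm (iUnion_subset fun
    | none => subset_rfl
    | some k => ?_) (subset_iUnion (legPiece P 0) none)
  rintro _ ⟨t, ht, rfl⟩
  rw [Pi.zero_apply, Icc_self, mem_singleton_iff] at ht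
  exact ⟨0, hP, by rw [ht, legPoint_zero, body_zero]⟩

end Legs

section Tips

variable {E F : Type*} [MetricSpace E] [MetricSpace F] {A : Set E} {B : Set F}

/-- The points of `A` near which the points of `A` are determined by their distance to it, such as
the endpoints of a segment. -/
def tips (A : Set E) : Set E :=
  {x ∈ A | ∃ ε > 0, InjOn (dist x) (A ∩ Metric.ball x ε)}

lemma mem_tips_of_isometry {f : A → F} (hf : Isometry f) (hfB : ∀ a, f a ∈ B) {x : A}
    (hx : f x ∈ tips B) : (x : E) ∈ tips A := by
  obtain ⟨-, ε, hε, hinj⟩ := hx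
  refine ⟨x.2, ε, hε, fun a ⟨ha, haε⟩ b ⟨hb, hbε⟩ hab => ?_⟩
  have mem_ball {c : A} (hc : (c : E) ∈ Metric.ball (x : E) ε) : f c ∈ B ∩ Metric.ball (f x) ε :=
    ⟨hfB c, by rwa [Metric.mem_ball, hf.dist_eq]⟩
  have hfab : f ⟨a, ha⟩ = f ⟨b, hb⟩ :=
    hinj (mem_ball haε) (mem_ball hbε) (by simpa only [hf.dist_eq, Subtype.dist_eq] using hab)
  exact congrArg Subtype.val (hf.injective hfab)

lemma tips_Icc_subset (a b : ℝ) : tips (Icc a b) ⊆ {a, b} := by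
  rintro t ⟨⟨hat, htb⟩, ε, hε, hinj⟩
  by_contra! hne
  simp only [mem_insert_iff, mem_singleton_iff, not_or] at hne
  have hat' : a < t := lt_of_le_of_ne' hat hne.1
  have htb' : t < b := lt_of_le_of_ne htb hne.2
  obtain ⟨δ, hδ, hδmin⟩ := exists_between (lt_min hε (lt_min (sub_pos.2 hat') (sub_pos.2 htb')))
  simp only [lt_min_iff] at hδmin
  have heq := @hinj (t - δ) ⟨⟨by linarith, by linarith⟩, by simp [abs_of_pos hδ, hδmin.1]⟩
    (t + δ) ⟨⟨by linarith, by linarith⟩, by simp [abs_of_pos hδ, hδmin.1]⟩ (by simp)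
  linarith

variable {V V' : Type*} [NormedAddCommGroup V] [NormedAddCommGroup V'] {P : Set V} {P' : Set V'}
  {l l' : ℕ → ℝ}

lemma legPoint_mem_tips (hP : 0 ∈ P) (hl : ∀ k, 0 < l k) (k : ℕ) :
    legPoint V k (l k) ∈ tips (attachLegs P l) := by
  have hwedge := isWedge_legPiece hP fun k => (hl k).le
  have hmem : l k ∈ Icc 0 (l k) := right_mem_Icc.2 (hl k).le
  have hball : attachLegs P l ∩ Metric.ball (legPoint V k (l k)) (l k) ⊆
      legPoint V k '' Icc 0 (l k) := by
    rintro a ⟨ha, hak⟩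
    obtain ⟨i, hi⟩ := mem_iUnion.1 ha
    by_contra hne
    have hik : i ≠ some k := by
      rintro rfl
      exact hne hi
    rw [Metric.mem_ball, hwedge.dist_eq i (some k) hik a hi _ (mem_image_of_mem _ hmem),
      dist_legPoint_zero, abs_of_pos (hl k)] at hak
    linarith [dist_nonneg (x := a) (y := 0)]
  refine ⟨legPoint_mem_attachLegs hmem, l k, hl k, InjOn.mono hball ?_⟩
  rintro _ ⟨s, hs, rfl⟩ _ ⟨t, ht, rfl⟩ hst
  rw [(isometry_legPoint k).dist_eq, (isometry_legPoint k).dist_eq, Real.dist_eq, Real.dist_eq,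
    abs_of_nonneg (sub_nonneg.2 hs.2), abs_of_nonneg (sub_nonneg.2 ht.2), sub_right_inj] at hst
  rw [hst]

lemma dist_legPoint_tips (hl : ∀ k, 0 < l k) {j k : ℕ} (hjk : j ≠ k) :
    dist (legPoint V j (l j)) (legPoint V k (l k)) = l j + l k := by
  rw [dist_legPoint_legPoint hjk, dist_legPoint_zero, dist_legPoint_zero, abs_of_pos (hl j),
    abs_of_pos (hl k)]

lemma tips_attachLegs (hP : 0 ∈ P) (hPtips : tips P = ∅) (hl : ∀ k, 0 < l k) :
    tips (attachLegs P l) = range fun k => legPoint V k (l k) := by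
  refine subset_antisymm (fun z hz => ?_) (range_subset_iff.2 (legPoint_mem_tips hP hl))
  have body_notMem (x : V) (hx : x ∈ P) : body x ∉ tips (attachLegs P l) := fun h =>
    hPtips.subset (mem_tips_of_isometry (B := attachLegs P l) (f := fun a : P => body a)
      (x := ⟨x, hx⟩) (isometry_body.comp isometry_subtype_coe)
      (fun a => body_mem_attachLegs a.2) h)
  obtain ⟨_ | k, hzk⟩ := mem_iUnion.1 hz.1
  · obtain ⟨x, hx, rfl⟩ := hzk
    exact absurd hz (body_notMem x hx)
  · obtain ⟨t, ht, rfl⟩ := hzk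
    have htip : t ∈ tips (Icc 0 (l k)) :=
      mem_tips_of_isometry (B := attachLegs P l)
        (f := fun s : Icc 0 (l k) => legPoint V k s) (x := ⟨t, ht⟩)
        ((isometry_legPoint k).comp isometry_subtype_coe)
        (fun s => legPoint_mem_attachLegs s.2) hz
    rcases tips_Icc_subset _ _ htip with rfl | rfl
    · rw [legPoint_zero, ← body_zero] at hz
      exact absurd hz (body_notMem 0 hP)
    · exact mem_range_self k

lemma eq_comp_of_pairwise_add_eq {σ : ℕ → ℕ}
    (h : ∀ j k, j ≠ k → l j + l k = l' (σ j) + l' (σ k)) (k : ℕ) : l k = l' (σ k) := by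
  linarith [h k (k + 1) (by lia), h k (k + 2) (by lia), h (k + 1) (k + 2) (by lia)]

lemma range_subset_range_of_attachLegs (hP : 0 ∈ P) (hP' : 0 ∈ P') (hPtips' : tips P' = ∅)
    (hl : ∀ k, 0 < l k) (hl' : ∀ k, 0 < l' k) (e : attachLegs P l ≃ᵢ attachLegs P' l') :
    range l ⊆ range l' := by
  let tip (k : ℕ) : attachLegs P l := ⟨_, (legPoint_mem_tips hP hl k).1⟩
  have htip (k : ℕ) : (e (tip k) : LegSpace V') ∈ tips (attachLegs P' l') := by
    refine mem_tips_of_isometry (f := fun b => (e.symm b : LegSpace V))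
      (isometry_subtype_coe.comp e.symm.isometry) (fun b => (e.symm b).2) ?_
    rw [e.symm_apply_apply]
    exact legPoint_mem_tips hP hl k
  rw [tips_attachLegs hP' hPtips' hl'] at htip
  choose σ hσ using htip
  have dist_image (j k : ℕ) (hjk : j ≠ k) :
      dist (legPoint V' (σ j) (l' (σ j))) (legPoint V' (σ k) (l' (σ k))) = l j + l k := by
    rw [← dist_legPoint_tips (V := V) hl hjk]
    change dist _ _ = dist (tip j) (tip k)
    rw [← e.isometry.dist_eq (tip j), Subtype.dist_eq, ← hσ, ← hσ]
  have hdist (j k : ℕ) (hjk : j ≠ k) : l j + l k = l' (σ j) + l' (σ k) := by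
    rw [← dist_image j k hjk, dist_legPoint_tips hl']
    intro hσjk
    have := dist_image j k hjk
    rw [hσjk, dist_self] at this
    linarith [hl j, hl k]
  rintro _ ⟨k, rfl⟩
  exact ⟨σ k, (eq_comp_of_pairwise_add_eq hdist k).symm⟩

lemma eq_of_isometryEquiv_attachLegs (hP : 0 ∈ P) (hP' : 0 ∈ P') (hPtips : tips P = ∅)
    (hPtips' : tips P' = ∅) (hl : ∀ k, 0 < l k) (hl' : ∀ k, 0 < l' k) (hlanti : StrictAnti l)
    (hlanti' : StrictAnti l') (e : attachLegs P l ≃ᵢ attachLegs P' l') : l = l' := by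
  have hrange : range l = range l' :=
    (range_subset_range_of_attachLegs hP hP' hPtips' hl hl' e).antisymm
      (range_subset_range_of_attachLegs hP' hP hPtips hl' hl e.symm)
  have hdual : range (OrderDual.toDual ∘ l) = range (OrderDual.toDual ∘ l') := by
    rw [range_comp, range_comp, hrange]
  exact (StrictMono.range_inj hlanti.dual_right hlanti'.dual_right).1 hdual

end Tips

section ProductTips

lemma exists_forall_exists_dist_eq {X : Type*} [MetricSpace X] {A : Set X}
    (hA : IsPreconnected A) (hA' : A.Nontrivial) {x : X} (hx : x ∈ A) :
    ∃ r > 0, ∀ δ ∈ Icc 0 r, ∃ y ∈ A, dist x y = δ := by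
  obtain ⟨y, hy, hyx⟩ := hA'.exists_ne x
  refine ⟨dist x y, dist_pos.2 hyx.symm, fun δ hδ => ?_⟩
  have h := hA.intermediate_value hx hy (f := dist x) (by fun_prop)
  rw [dist_self] at h
  exact h hδ

variable {ι : Type*} [Fintype ι] {E : ι → Type*} [∀ i, MetricSpace (E i)] {A : ∀ i, Set (E i)}

lemma exists_mem_l2Pi_update {x : PiLp 2 E} (hx : x ∈ l2Pi A) {i : ι} {y : E i}
    (hy : y ∈ A i) : ∃ z ∈ l2Pi A, dist x z = dist (x i) y ∧ z i = y ∧ ∀ j ≠ i, z j = x j := by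
  classical
  refine ⟨WithLp.toLp 2 (Function.update (WithLp.ofLp x) i y), fun j => ?_, ?_, ?_, ?_⟩
  · rcases eq_or_ne j i with rfl | hj
    · simpa using hy
    · simpa [hj] using hx j
  · refine (sq_eq_sq₀ dist_nonneg dist_nonneg).1 ?_
    rw [piLp_two_dist_sq, Fintype.sum_eq_single i fun j hj => by simp [hj]]
    simp
  · simp
  · intro j hj
    simp [hj]

lemma tips_l2Pi_eq_empty {i j : ι} (hij : i ≠ j) (hi : IsPreconnected (A i))
    (hi' : (A i).Nontrivial) (hj : IsPreconnected (A j)) (hj' : (A j).Nontrivial) :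
    tips (l2Pi A) = ∅ := by
  refine eq_empty_of_forall_notMem fun x ⟨hx, ε, hε, hinj⟩ => ?_
  obtain ⟨r, hr, hri⟩ := exists_forall_exists_dist_eq hi hi' (hx i)
  obtain ⟨s, hs, hsj⟩ := exists_forall_exists_dist_eq hj hj' (hx j)
  obtain ⟨δ, hδ, hδmin⟩ := exists_between (lt_min hε (lt_min hr hs))
  simp only [lt_min_iff] at hδmin
  obtain ⟨a, ha, hxa⟩ := hri δ ⟨hδ.le, hδmin.2.1.le⟩
  obtain ⟨b, hb, hxb⟩ := hsj δ ⟨hδ.le, hδmin.2.2.le⟩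
  obtain ⟨y, hy, hxy, hyi, -⟩ := exists_mem_l2Pi_update hx ha
  obtain ⟨z, hz, hxz, -, hzj⟩ := exists_mem_l2Pi_update hx hb
  have hyz : y = z := hinj ⟨hy, by rw [Metric.mem_ball', hxy, hxa]; exact hδmin.1⟩
    ⟨hz, by rw [Metric.mem_ball', hxz, hxb]; exact hδmin.1⟩ (by rw [hxy, hxz, hxa, hxb])
  rw [← hyi, hyz, hzj i hij, dist_self] at hxa
  exact hδ.ne hxa

end ProductTips

/-! ### Continuity of the construction -/

section Continuity

/-- The points of the cube `[0, 1]^ℕ` with at most one nonzero coordinate. This compact set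
parametrizes the legs of `attachLegs P l` for all `l` at once. -/
def cubeAxes : Set (ℕ → ℝ) :=
  (univ.pi fun _ => Icc 0 1) ∩ {c | ∀ j k, j ≠ k → c j * c k = 0}

instance : CompactSpace cubeAxes := by
  refine isCompact_iff_compactSpace.1 ((isCompact_univ_pi fun _ => isCompact_Icc).inter_right ?_)
  simp only [Set.ofPred_forall]
  exact isClosed_iInter fun j => isClosed_iInter fun k => isClosed_iInter fun _ =>
    isClosed_eq (by fun_prop) continuous_const

instance : Nonempty cubeAxes := ⟨0, fun _ _ => ⟨le_rfl, zero_le_one⟩, fun _ _ _ => mul_zero 0⟩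

lemma single_mem_cubeAxes (k : ℕ) {t : ℝ} (ht : t ∈ Icc (0 : ℝ) 1) :
    (Pi.single k t : ℕ → ℝ) ∈ cubeAxes := by
  refine ⟨fun j _ => ?_, fun i j hij => ?_⟩
  · rcases eq_or_ne j k with rfl | hj
    · simpa using ht
    · simp [hj]
  · rcases eq_or_ne i k with rfl | hi
    · simp [hij.symm]
    · simp [hi]

variable {V : Type*} [NormedAddCommGroup V] {P : Set V} {l : ℕ → ℝ}

lemma tsum_legPoint_eq {c : ℕ → ℝ} {k : ℕ} (hc : ∀ j ≠ k, c j = 0) :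
    ∑' j, legPoint V j (c j * l j) = legPoint V k (c k * l k) :=
  tsum_eq_single k fun j hj => by rw [hc j hj, zero_mul, legPoint_zero]

lemma attachLegs_eq_union (hP : 0 ∈ P) (hl : 0 ≤ l) :
    attachLegs P l = body '' P ∪ range fun c : cubeAxes => ∑' k, legPoint V k (c.1 k * l k) := by
  refine subset_antisymm (iUnion_subset fun
    | none => subset_union_left
    | some k => subset_union_of_subset_right ?_ _) (union_subset
      (subset_iUnion (legPiece P l) none) ?_)
  · rintro _ ⟨t, ht, rfl⟩
    refine ⟨⟨Pi.single k (t / l k), single_mem_cubeAxes k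
      ⟨div_nonneg ht.1 (hl k), div_le_one_of_le₀ ht.2 (hl k)⟩⟩,
      (tsum_legPoint_eq fun j hj => Pi.single_eq_of_ne (M := fun _ => ℝ) hj _).trans ?_⟩
    have ht' : t / l k * l k = t := div_mul_cancel_of_imp fun h => le_antisymm (h ▸ ht.2) ht.1
    rw [Pi.single_eq_same, ht']
  · rintro _ ⟨c, rfl⟩
    beta_reduce
    by_cases h : ∃ k, c.1 k ≠ 0
    · obtain ⟨k, hk⟩ := h
      have hck := c.2.1 k (mem_univ k)
      rw [tsum_legPoint_eq fun j hj => (mul_eq_zero.1 (c.2.2 j k hj)).resolve_right hk]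
      exact legPoint_mem_attachLegs
        ⟨mul_nonneg hck.1 (hl k), mul_le_of_le_one_left (hl k) hck.2⟩
    · push Not at h
      simp only [h, zero_mul, legPoint_zero, tsum_zero]
      exact body_mem_attachLegs hP

variable {Y : Type*} [TopologicalSpace Y]

lemma exists_continuous_eq_attachLegs [CompleteSpace V] {P : Y → NonemptyCompacts V}
    (hP : Continuous P) (hP0 : ∀ y, 0 ∈ P y) {l : Y → ℕ → ℝ} (hl : Continuous l)
    (hl0 : ∀ y, 0 ≤ l y) {b : ℕ → ℝ} (hb : Summable b) (hlb : ∀ y, l y ≤ b) :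
    ∃ Z : Y → NonemptyCompacts (LegSpace V), Continuous Z ∧
      ∀ y, (Z y : Set (LegSpace V)) = attachLegs (P y) (l y) := by
  let Φ (y : Y) (c : cubeAxes) : LegSpace V := ∑' k, legPoint V k (c.1 k * l y k)
  have hΦ : Continuous Φ.uncurry := by
    have hcoord (k : ℕ) : Continuous fun x : Y × cubeAxes => x.2.1 k * l x.1 k :=
      ((continuous_apply k).comp (continuous_subtype_val.comp continuous_snd)).mul
        ((continuous_apply k).comp (hl.comp continuous_fst))
    refine continuous_tsum (fun k => (isometry_legPoint k).continuous.comp (hcoord k)) hb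
      fun k ⟨y, c⟩ => ?_
    have hck := c.2.1 k (mem_univ k)
    rw [← dist_zero_right, dist_legPoint_zero, abs_of_nonneg (mul_nonneg hck.1 (hl0 y k))]
    exact (mul_le_of_le_one_left (hl0 y k) hck.2).trans (hlb y k)
  have hbody : Continuous (body : V → LegSpace V) := isometry_body.continuous
  refine ⟨fun y => (P y).map body hbody ⊔ NonemptyCompacts.map (Φ y) (by fun_prop) ⊤,
    by fun_prop, fun y => ?_⟩
  rw [attachLegs_eq_union (hP0 y) (hl0 y), NonemptyCompacts.coe_sup, NonemptyCompacts.coe_map,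
    NonemptyCompacts.coe_map, NonemptyCompacts.coe_top, image_univ]

lemma exists_continuous_eq_l2Pi_smul {ι : Type*} {E : ι → Type*}
    [∀ i, NormedAddCommGroup (E i)] [∀ i, NormedSpace ℝ (E i)] (K : ∀ i, NonemptyCompacts (E i))
    {w : Y → ι → ℝ} (hw : Continuous w) :
    ∃ P : Y → NonemptyCompacts (PiLp 2 E), Continuous P ∧
      ∀ y, (P y : Set (PiLp 2 E)) = l2Pi fun i => w y i • (K i : Set (E i)) := by
  let C : NonemptyCompacts (∀ i, E i) :=
    ⟨⟨univ.pi fun i => K i, isCompact_univ_pi fun i => (K i).isCompact⟩,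
      univ_pi_nonempty_iff.2 fun i => (K i).nonempty⟩
  let Ψ (y : Y) (a : ∀ i, E i) : PiLp 2 E := WithLp.toLp 2 fun i => w y i • a i
  have hΨ : Continuous Ψ.uncurry := by fun_prop
  refine ⟨fun y => C.map (Ψ y) (by fun_prop), by fun_prop, fun y => ?_⟩
  have hpi : (univ.pi fun i => w y i • (K i : Set (E i))) =
      Pi.map (fun i a => w y i • a) '' (C : Set (∀ i, E i)) := (piMap_image_univ_pi _ _).symm
  rw [l2Pi_eq_image, NonemptyCompacts.coe_map, hpi, image_image]
  rfl

end Continuity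

/-! ### The classes in the Gromov–Hausdorff space -/

section Classes

lemma toGHSpace_eq_of_range_eq {X E : Type*} [MetricSpace X] [CompactSpace X] [Nonempty X]
    [MetricSpace E] {f : X → E} (hf : Isometry f) {K : NonemptyCompacts E}
    (hK : range f = K) : K.toGHSpace = toGHSpace X := by
  obtain rfl : K = ⟨⟨range f, isCompact_range hf.continuous⟩, range_nonempty f⟩ :=
    NonemptyCompacts.ext hK.symm
  exact toGHSpace_eq_toGHSpace_iff_isometryEquiv.2 ⟨hf.isometryEquivOnRange.symm⟩

variable {E : Type*} [MetricSpace E]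

lemma exists_isometry_rep_range_eq (K : NonemptyCompacts E) :
    ∃ f : K.toGHSpace.Rep → E, Isometry f ∧ range f = K := by
  obtain ⟨e⟩ := toGHSpace_eq_toGHSpace_iff_isometryEquiv.1 K.toGHSpace.toGHSpace_rep
  refine ⟨fun x => (e x : E), isometry_subtype_coe.comp e.isometry, ?_⟩
  rw [range_comp', e.surjective.range_eq, image_univ, Subtype.range_coe]

lemma toGHSpace_mem_GHConnected {K : NonemptyCompacts E} :
    K.toGHSpace ∈ GHConnected ↔ IsConnected (K : Set E) := by
  obtain ⟨f, hf, hfK⟩ := exists_isometry_rep_range_eq K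
  rw [← hfK, ← image_univ, IsConnected, image_nonempty,
    hf.isEmbedding.isInducing.isPreconnected_image]
  exact connectedSpace_iff_univ

lemma toGHSpace_mem_GHPathConnected {K : NonemptyCompacts E} :
    K.toGHSpace ∈ GHPathConnected ↔ IsPathConnected (K : Set E) := by
  obtain ⟨f, hf, hfK⟩ := exists_isometry_rep_range_eq K
  rw [← hfK, ← image_univ, ← hf.isEmbedding.isInducing.isPathConnected_iff]
  exact pathConnectedSpace_iff_univ

lemma toGHSpace_mem_GHGeodesic {K : NonemptyCompacts E} :
    K.toGHSpace ∈ GHGeodesic ↔ IsGeodesicSet (K : Set E) := by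
  obtain ⟨f, hf, hfK⟩ := exists_isometry_rep_range_eq K
  rw [← hfK]
  exact isGeodesicSpace_iff_isGeodesicSet_range hf

lemma toGHSpace_mem_GHCat0 {K : NonemptyCompacts E} :
    K.toGHSpace ∈ GHCat0 ↔ IsCAT0Set (K : Set E) := by
  obtain ⟨f, hf, hfK⟩ := exists_isometry_rep_range_eq K
  rw [← hfK]
  exact isCAT0Space_iff_isCAT0Set_range hf

lemma nontrivial_of_nontrivial_rep {K : NonemptyCompacts E} (hK : Nontrivial K.toGHSpace.Rep) :
    (K : Set E).Nontrivial := by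
  obtain ⟨f, hf, hfK⟩ := exists_isometry_rep_range_eq K
  rw [← hfK, ← image_univ]
  exact nontrivial_univ.image hf.injective

lemma exists_toGHSpace_eq_zero_mem (q : GHSpace) :
    ∃ K : NonemptyCompacts (lp (fun _ : ℕ => ℝ) ⊤), K.toGHSpace = q ∧ 0 ∈ K := by
  obtain ⟨x₀⟩ : Nonempty q.Rep := inferInstance
  let f (x : q.Rep) : lp (fun _ : ℕ => ℝ) ⊤ :=
    kuratowskiEmbedding q.Rep x - kuratowskiEmbedding q.Rep x₀
  have hf : Isometry f := (IsometryEquiv.subRight _).isometry.comp (kuratowskiEmbedding.isometry _)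
  let K : NonemptyCompacts _ := ⟨⟨range f, isCompact_range hf.continuous⟩, range_nonempty f⟩
  exact ⟨K, (toGHSpace_eq_of_range_eq hf rfl).trans q.toGHSpace_rep, x₀, sub_self _⟩

lemma eq_of_toGHSpace_eq {V V' : Type*} [NormedAddCommGroup V] [NormedAddCommGroup V']
    {P : Set V} {P' : Set V'} {l l' : ℕ → ℝ} {Z : NonemptyCompacts (LegSpace V)}
    {Z' : NonemptyCompacts (LegSpace V')} (hP : 0 ∈ P) (hP' : 0 ∈ P') (hPtips : tips P = ∅)
    (hPtips' : tips P' = ∅) (hl : ∀ k, 0 < l k) (hl' : ∀ k, 0 < l' k) (hlanti : StrictAnti l)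
    (hlanti' : StrictAnti l') (hZ : (Z : Set (LegSpace V)) = attachLegs P l)
    (hZ' : (Z' : Set (LegSpace V')) = attachLegs P' l') (h : Z.toGHSpace = Z'.toGHSpace) :
    l = l' := by
  obtain ⟨e⟩ := toGHSpace_eq_toGHSpace_iff_isometryEquiv.1 h
  have e' : (Z : Set (LegSpace V)) ≃ᵢ (Z' : Set (LegSpace V')) := e
  rw [hZ, hZ'] at e'
  exact eq_of_isometryEquiv_attachLegs hP hP' hPtips hPtips' hl hl' hlanti hlanti' e'

variable {S : Set GHSpace}

lemma exists_mem_nontrivial_rep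
    (hS : S = GHConnected ∨ S = GHPathConnected ∨ S = GHGeodesic ∨ S = GHCat0) :
    ∃ q ∈ S, q ∈ GHConnected ∧ Nontrivial q.Rep := by
  let I : NonemptyCompacts ℝ := ⟨⟨Icc 0 1, isCompact_Icc⟩, nonempty_Icc.2 zero_le_one⟩
  have hIconv : Convex ℝ (I : Set ℝ) := convex_Icc 0 1
  have hIpath := hIconv.isPathConnected I.nonempty
  have hIcat0 := isCAT0Set_of_convex hIconv
  refine ⟨I.toGHSpace, ?_, toGHSpace_mem_GHConnected.2 hIpath.isConnected, ?_⟩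
  · rcases hS with rfl | rfl | rfl | rfl
    · exact toGHSpace_mem_GHConnected.2 hIpath.isConnected
    · exact toGHSpace_mem_GHPathConnected.2 hIpath
    · exact toGHSpace_mem_GHGeodesic.2 hIcat0.isGeodesicSet
    · exact toGHSpace_mem_GHCat0.2 hIcat0
  · obtain ⟨f, -, hfI⟩ := exists_isometry_rep_range_eq I
    obtain ⟨⟨a, ha⟩, ⟨b, hb⟩⟩ : 0 ∈ range f ∧ 1 ∈ range f := by
      rw [hfI]
      exact ⟨left_mem_Icc.2 zero_le_one, right_mem_Icc.2 zero_le_one⟩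
    exact ⟨a, b, ne_of_apply_ne f (by rw [ha, hb]; exact zero_ne_one)⟩

lemma exists_factors (hS : S = GHConnected ∨ S = GHPathConnected ∨ S = GHGeodesic ∨ S = GHCat0)
    {ι : Type*} {p : ι → GHSpace} (hp : ∀ i, p i ∈ S) (κ : Type*) :
    ∃ K : ι ⊕ κ → NonemptyCompacts (lp (fun _ : ℕ => ℝ) ⊤), (∀ i, 0 ∈ K i) ∧
      (∀ i, (K i).toGHSpace ∈ S) ∧ (∀ i, (K (.inl i)).toGHSpace = p i) ∧
      (∀ j, IsConnected (K (.inr j) : Set (lp (fun _ : ℕ => ℝ) ⊤))) ∧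
        ∀ j, (K (.inr j) : Set (lp (fun _ : ℕ => ℝ) ⊤)).Nontrivial := by
  obtain ⟨q, hqS, hqconn, hqnontriv⟩ := exists_mem_nontrivial_rep hS
  choose K hK hK0 using exists_toGHSpace_eq_zero_mem
  refine ⟨Sum.elim (K ∘ p) fun _ => K q, ?_, ?_, fun i => hK (p i), fun _ => ?_, fun _ => ?_⟩
  · rintro (i | _)
    exacts [hK0 (p i), hK0 q]
  · rintro (i | _)
    exacts [(hK (p i)).symm ▸ hp i, (hK q).symm ▸ hqS]
  · exact toGHSpace_mem_GHConnected.1 ((hK q).symm ▸ hqconn)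
  · exact nontrivial_of_nontrivial_rep ((hK q).symm ▸ hqnontriv)

variable {ι : Type*} {E : ι → Type*} [∀ i, NormedAddCommGroup (E i)] [∀ i, NormedSpace ℝ (E i)]

lemma zero_mem_l2Pi_smul {A : ∀ i, Set (E i)} (hA : ∀ i, 0 ∈ A i) (w : ι → ℝ) :
    (0 : PiLp 2 E) ∈ l2Pi fun i => w i • A i :=
  fun i => ⟨0, hA i, smul_zero _⟩

lemma l2Pi_single_smul [DecidableEq ι] {A : ∀ i, Set (E i)} (hA : ∀ i, 0 ∈ A i) (i : ι) :
    l2Pi (fun j => (Pi.single i 1 : ι → ℝ) j • A j) = PiLp.single 2 i '' A i := by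
  refine subset_antisymm (fun x hx => ?_) ?_
  · have hi : x i ∈ A i := by simpa using hx i
    refine ⟨x i, hi, PiLp.ext fun j => ?_⟩
    rcases eq_or_ne j i with rfl | hj
    · simp
    · obtain ⟨a, -, ha⟩ := hx j
      simpa [hj] using ha
  · rintro _ ⟨a, ha, rfl⟩ j
    rcases eq_or_ne j i with rfl | hj
    · simpa using ha
    · exact ⟨0, hA j, by simp [hj]⟩

variable [Fintype ι] {K : ∀ i, NonemptyCompacts (E i)} {w : ι → ℝ} {l : ℕ → ℝ}
  {Z : NonemptyCompacts (LegSpace (PiLp 2 E))}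

lemma toGHSpace_mem_of_eq_attachLegs
    (hS : S = GHConnected ∨ S = GHPathConnected ∨ S = GHGeodesic ∨ S = GHCat0)
    (hK0 : ∀ i, 0 ∈ K i) (hK : ∀ i, (K i).toGHSpace ∈ S) (hl : 0 ≤ l)
    (hZ : (Z : Set _) = attachLegs (l2Pi fun i => w i • (K i : Set (E i))) l) :
    Z.toGHSpace ∈ S := by
  have h0 := zero_mem_l2Pi_smul hK0 w
  rcases hS with rfl | rfl | rfl | rfl
  · simp only [toGHSpace_mem_GHConnected, hZ] at hK ⊢
    exact isConnected_attachLegs h0 hl (isConnected_l2Pi fun i =>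
      (hK i).image _ (continuous_const_smul (w i)).continuousOn)
  · simp only [toGHSpace_mem_GHPathConnected, hZ] at hK ⊢
    exact isPathConnected_attachLegs h0 hl (isPathConnected_l2Pi fun i =>
      (hK i).image (continuous_const_smul (w i)))
  · simp only [toGHSpace_mem_GHGeodesic, hZ] at hK ⊢
    exact isGeodesicSet_attachLegs h0 hl (isGeodesicSet_l2Pi fun i => (hK i).const_smul (w i))
  · simp only [toGHSpace_mem_GHCat0, hZ] at hK ⊢
    exact isCAT0Set_attachLegs h0 hl (isCAT0Set_l2Pi fun i => (hK i).const_smul (w i))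

lemma toGHSpace_eq_of_eq_attachLegs_zero [DecidableEq ι] (hK0 : ∀ i, 0 ∈ K i) (i : ι)
    (hZ : (Z : Set _) =
      attachLegs (l2Pi fun j => (Pi.single i 1 : ι → ℝ) j • (K j : Set (E j))) 0) :
    Z.toGHSpace = (K i).toGHSpace := by
  have hf : Isometry fun a : K i => (body (PiLp.single 2 i (a : E i)) : LegSpace (PiLp 2 E)) :=
    (isometry_body.comp (.of_dist_eq (PiLp.dist_single_same 2 E i))).comp isometry_subtype_coe
  refine toGHSpace_eq_of_range_eq hf ?_
  rw [hZ, attachLegs_zero (zero_mem_l2Pi_smul hK0 _), l2Pi_single_smul hK0, image_image,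
    image_eq_range]
  rfl

end Classes

/-! ### Interpolation -/

section Parameters

/-- Leg lengths recording the scale `s` and the point `a` of the Hilbert cube. The factor `1 / 4`
makes them decrease whatever `a` is. -/
noncomputable def legLength (s : ℝ) (a : ℕ → unitInterval) : ℕ → ℝ
  | 0 => s
  | k + 1 => s * (1 / 4) ^ (k + 1) * (1 + a k)

variable {s t : ℝ} {a b : ℕ → unitInterval}

lemma le_legLength (hs : 0 ≤ s) (k : ℕ) : s * (1 / 4) ^ k ≤ legLength s a k := by
  cases k with
  | zero => simp [legLength]
  | succ k => exact le_mul_of_one_le_right (by positivity) (by linarith [(a k).2.1])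

lemma legLength_le (hs : 0 ≤ s) (k : ℕ) : legLength s a k ≤ s * (1 / 4) ^ k * 2 := by
  cases k with
  | zero =>
    simp only [legLength]
    linarith
  | succ k => exact mul_le_mul_of_nonneg_left (by linarith [(a k).2.2]) (by positivity)

lemma legLength_pos (hs : 0 < s) (k : ℕ) : 0 < legLength s a k :=
  lt_of_lt_of_le (by positivity) (le_legLength hs.le k)

lemma legLength_nonneg (hs : 0 ≤ s) : 0 ≤ legLength s a := fun k =>
  le_trans (by positivity) (le_legLength hs k)

lemma legLength_zero : legLength 0 a = 0 := by
  funext k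
  cases k <;> simp [legLength]

lemma strictAnti_legLength (hs : 0 < s) : StrictAnti (legLength s a) :=
  strictAnti_nat_of_succ_lt fun k => calc
    legLength s a (k + 1) ≤ s * (1 / 4) ^ (k + 1) * 2 := legLength_le hs.le _
    _ = s * (1 / 4) ^ k * (1 / 2) := by ring
    _ < s * (1 / 4) ^ k := mul_lt_of_lt_one_right (by positivity) (by norm_num)
    _ ≤ legLength s a k := le_legLength hs.le k

lemma eq_of_legLength_eq (hs : s ≠ 0) (h : legLength s a = legLength t b) : a = b := by
  obtain rfl : s = t := congrFun h 0
  funext k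
  have hk : s * (1 / 4) ^ (k + 1) * (1 + (a k : ℝ)) = s * (1 / 4) ^ (k + 1) * (1 + b k) :=
    congrFun h (k + 1)
  exact Subtype.ext (add_left_cancel (mul_left_cancel₀ (by positivity) hk))

variable {Y : Type*} [TopologicalSpace Y]

lemma continuous_legLength {s : Y → ℝ} (hs : Continuous s) {a : Y → ℕ → unitInterval}
    (ha : Continuous a) : Continuous fun y => legLength (s y) (a y) :=
  continuous_pi fun
    | 0 => hs
    | k + 1 => by
      simp only [legLength]
      fun_prop

lemma exists_continuous_eq_single [NormalSpace Y] {ι : Type*} [Finite ι] [DecidableEq ι]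
    {A : ι → Set Y} (hA : ∀ i, IsClosed (A i)) (hdisj : Pairwise (Function.onFun Disjoint A)) :
    ∃ u : Y → ι → ℝ, Continuous u ∧ ∀ i, ∀ y ∈ A i, u y = Pi.single i 1 := by
  have h (i : ι) : ∃ f : C(Y, ℝ), EqOn f 0 (⋃ j ≠ i, A j) ∧ EqOn f 1 (A i) := by
    have hclosed : IsClosed (⋃ j ≠ i, A j) :=
      (toFinite {j | j ≠ i}).isClosed_biUnion fun j _ => hA j
    have hd : Disjoint (⋃ j ≠ i, A j) (A i) := disjoint_iUnion₂_left.2 fun j hj => hdisj hj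
    obtain ⟨f, hf0, hf1, -⟩ := exists_continuous_zero_one_of_isClosed hclosed (hA i) hd
    exact ⟨f, hf0, hf1⟩
  choose f hf0 hf1 using h
  refine ⟨fun y i => f i y, by fun_prop, fun i y hy => funext fun j => ?_⟩
  rcases eq_or_ne j i with rfl | hj
  · rw [Pi.single_eq_same]
    exact hf1 j hy
  · rw [Pi.single_eq_of_ne hj]
    exact hf0 j (mem_biUnion hj.symm hy)

lemma exists_continuous_weights [PerfectlyNormalSpace Y] {ι : Type*} [Finite ι] [DecidableEq ι]
    (κ : Type*) [DecidableEq κ] {A : ι → Set Y} (hA : ∀ i, IsClosed (A i))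
    (hdisj : Pairwise (Function.onFun Disjoint A)) :
    ∃ (s : C(Y, ℝ)) (w : Y → ι ⊕ κ → ℝ), Continuous w ∧ (∀ y, s y ∈ Icc 0 1) ∧
      (∀ y, s y = 0 ↔ y ∈ ⋃ i, A i) ∧ (∀ y j, w y (.inr j) = s y) ∧
        ∀ i, ∀ y ∈ A i, w y = Pi.single (.inl i) 1 := by
  obtain ⟨u, hu, huA⟩ := exists_continuous_eq_single hA hdisj
  obtain ⟨s, hs, hsI⟩ := perfectlyNormalSpace_iff_forall_isClosed_preimage_zero.1
    inferInstance (⋃ i, A i) (isClosed_iUnion_of_finite hA)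
  have hs0 (y : Y) : s y = 0 ↔ y ∈ ⋃ i, A i := by
    rw [hs]
    rfl
  refine ⟨s, fun y => Sum.elim (u y) fun _ => s y, continuous_pi fun
    | .inl i => (continuous_apply i).comp hu
    | .inr _ => s.continuous, hsI, hs0, fun _ _ => rfl, fun i y hy => ?_⟩
  have hsy : s y = 0 := (hs0 y).2 (mem_iUnion_of_mem i hy)
  ext (j | j)
  · simp [huA i y hy, Pi.single_apply]
  · simp [hsy]

end Parameters

section Interpolation

variable {ι : Type*} [Fintype ι] {E : ι → Type*} [∀ i, NormedAddCommGroup (E i)]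
  [∀ i, NormedSpace ℝ (E i)]

lemma tips_l2Pi_smul_eq_empty {A : ∀ i, Set (E i)} {w : ι → ℝ} {i j : ι} (hij : i ≠ j)
    (hi : IsPreconnected (A i)) (hi' : (A i).Nontrivial) (hwi : w i ≠ 0)
    (hj : IsPreconnected (A j)) (hj' : (A j).Nontrivial) (hwj : w j ≠ 0) :
    tips (l2Pi fun i => w i • A i) = ∅ :=
  tips_l2Pi_eq_empty hij (hi.image _ (continuous_const_smul _).continuousOn)
    (hi'.image (smul_right_injective _ hwi)) (hj.image _ (continuous_const_smul _).continuousOn)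
    (hj'.image (smul_right_injective _ hwj))

lemma exists_continuous_eq_attachLegs_legLength {Y : Type*} [TopologicalSpace Y]
    [∀ i, CompleteSpace (E i)] {K : ∀ i, NonemptyCompacts (E i)} (hK : ∀ i, 0 ∈ K i)
    {w : Y → ι → ℝ} (hw : Continuous w) {s : Y → ℝ} (hs : Continuous s)
    (hsI : ∀ y, s y ∈ Icc 0 1) {a : Y → ℕ → unitInterval} (ha : Continuous a) :
    ∃ Z : Y → NonemptyCompacts (LegSpace (PiLp 2 E)), Continuous Z ∧
      ∀ y, (Z y : Set (LegSpace (PiLp 2 E))) =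
        attachLegs (l2Pi fun i => w y i • (K i : Set (E i))) (legLength (s y) (a y)) := by
  obtain ⟨P, hP, hPw⟩ := exists_continuous_eq_l2Pi_smul K hw
  have hP0 (y : Y) : 0 ∈ P y := by
    rw [← SetLike.mem_coe, hPw]
    exact zero_mem_l2Pi_smul hK (w y)
  have hbound (y : Y) : legLength (s y) (a y) ≤ fun k => (1 / 4) ^ k * 2 := fun k =>
    (legLength_le (hsI y).1 k).trans <| mul_le_mul_of_nonneg_right
      (mul_le_of_le_one_left (by positivity) (hsI y).2) zero_le_two
  have hsum : Summable fun k : ℕ => (1 / 4 : ℝ) ^ k * 2 :=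
    (summable_geometric_of_lt_one (by norm_num) (by norm_num)).mul_right 2
  obtain ⟨Z, hZ, hZP⟩ := exists_continuous_eq_attachLegs hP hP0 (continuous_legLength hs ha)
    (fun y => legLength_nonneg (hsI y).1) hsum hbound
  exact ⟨Z, hZ, fun y => by rw [hZP, hPw]⟩

end Interpolation

theorem statement17_general (S : Set GHSpace)
    (hS : S = GHConnected ∨ S = GHPathConnected ∨ S = GHGeodesic ∨ S = GHCat0)
    {Y : Type*} [TopologicalSpace Y] [MetrizableSpace Y] [SeparableSpace Y]
    {ι : Type*} [Finite ι] (A : ι → Set Y) (hA : ∀ i, IsClosed (A i))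
    (hdisj : Pairwise (Function.onFun Disjoint A)) (p : ι → GHSpace) (hp : ∀ i, p i ∈ S) :
    ∃ F : Y → GHSpace, Continuous F ∧ (∀ y, F y ∈ S) ∧ (∀ i, ∀ y ∈ A i, F y = p i) ∧
      InjOn F (⋃ i, A i)ᶜ := by
  classical
  have := Fintype.ofFinite ι
  let := metrizableSpaceMetric Y
  obtain ⟨s, w, hw, hsI, hs0, hws, hwA⟩ := exists_continuous_weights (Fin 2) hA hdisj
  obtain ⟨g, hg⟩ := Metric.PiNatEmbed.exists_embedding_to_hilbert_cube (X := Y)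
  obtain ⟨K, hK0, hKS, hKp, hKconn, hKnontriv⟩ := exists_factors hS hp (Fin 2)
  obtain ⟨Z, hZ, hZeq⟩ :=
    exists_continuous_eq_attachLegs_legLength hK0 hw s.continuous hsI hg.continuous
  refine ⟨NonemptyCompacts.toGHSpace ∘ Z, toGHSpace_continuous.comp hZ, fun y =>
    toGHSpace_mem_of_eq_attachLegs hS hK0 hKS (legLength_nonneg (hsI y).1) (hZeq y),
    fun i y hy => ?_, fun y hy y' hy' hyy' => ?_⟩
  · have hZy := hZeq y
    rw [hwA i y hy, (hs0 y).2 (mem_iUnion_of_mem i hy), legLength_zero] at hZy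
    exact (toGHSpace_eq_of_eq_attachLegs_zero hK0 (.inl i) hZy).trans (hKp i)
  · have hpos {y : Y} (hy : y ∈ (⋃ i, A i)ᶜ) : 0 < s y := (hsI y).1.lt_of_ne' ((hs0 y).not.2 hy)
    have htips {y : Y} (hy : y ∈ (⋃ i, A i)ᶜ) :
        tips (l2Pi fun i => w y i • (K i : Set (lp (fun _ : ℕ => ℝ) ⊤))) = ∅ :=
      have hwy (j : Fin 2) : w y (.inr j) ≠ 0 := by
        rw [hws]
        exact (hpos hy).ne'
      tips_l2Pi_smul_eq_empty (A := fun i => (K i : Set (lp (fun _ : ℕ => ℝ) ⊤)))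
        (Sum.inr_injective.ne zero_ne_one) (hKconn 0).isPreconnected (hKnontriv 0) (hwy 0)
        (hKconn 1).isPreconnected (hKnontriv 1) (hwy 1)
    have hlength : legLength (s y) (g y) = legLength (s y') (g y') :=
      eq_of_toGHSpace_eq (zero_mem_l2Pi_smul hK0 (w y)) (zero_mem_l2Pi_smul hK0 (w y'))
        (htips hy) (htips hy') (legLength_pos (hpos hy)) (legLength_pos (hpos hy'))
        (strictAnti_legLength (hpos hy)) (strictAnti_legLength (hpos hy')) (hZeq y) (hZeq y') hyy'
    exact hg.injective (eq_of_legLength_eq (hpos hy).ne' hlength)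

/-- Let `𝒮` be any one of `𝒞`, `𝒫`, `𝒢`, `𝒵`.  Let
`n ≥ 1`, `m ≥ 2`, let `H` be a compact metrizable space with `n+1` distinct
points `v 0, …, v n`, and let `H^× = H \ range v`.  Let `p 0, …, p n ∈ 𝒮`
have positive pairwise Gromov–Hausdorff distances.  Then there is a continuous
map `F : H × Fin m → 𝒮` (with `Fin m` discrete) such that `F (v i, j) = p i`
for all `i, j`, and `F` is injective on `H^× × Fin m`. -/
theorem statement17 (S : Set GHSpace)
    (hS : S = GHConnected ∨ S = GHPathConnected ∨ S = GHGeodesic ∨ S = GHCat0)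
    {H : Type*} [TopologicalSpace H] [CompactSpace H]
    [TopologicalSpace.MetrizableSpace H]
    (n m : ℕ) (hn : 1 ≤ n) (hm : 2 ≤ m)
    (v : Fin (n + 1) → H) (hv : Function.Injective v)
    (p : Fin (n + 1) → GHSpace) (hp : ∀ i, p i ∈ S)
    (hdist : ∀ i j, i ≠ j → 0 < dist (p i) (p j)) :
    ∃ F : H × Fin m → GHSpace,
      Continuous F ∧
      (∀ x, F x ∈ S) ∧
      (∀ i j, F (v i, j) = p i) ∧
      Set.InjOn F (((Set.range v)ᶜ) ×ˢ (Set.univ : Set (Fin m))) := by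
  let := metrizableSpaceMetric H
  obtain ⟨F, hF, hFS, hFp, hFinj⟩ := statement17_general S hS
    (fun i => ({v i} : Set H) ×ˢ (univ : Set (Fin m)))
    (fun i => isClosed_singleton.prod isClosed_univ)
    (fun i j hij => disjoint_prod.2 (.inl (disjoint_singleton.2 (hv.ne hij)))) p hp
  refine ⟨F, hF, hFS, fun i j => hFp i _ ⟨rfl, trivial⟩, hFinj.mono ?_⟩
  rintro ⟨x, j⟩ ⟨hx, -⟩
  simpa [eq_comm] using hx
end
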